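/- arXiv:2207.02040 — 8 statements merged into one kernel-verified Lean document; each statement's English description precedes it below -/
import Mathlib

section
/- The multiset {3, 3, 2, 2, 2} is outerplane-unigraphic on n = 5 vertices: there exists an outerplane graph on 5 vertices with degree multiset {3, 3, 2, 2, 2} (the pentagon with a single chord), and any two outerplane graphs on 5 vertices with this degree multiset are isomorphic. (This is the exceptional unigraphic polytope degree sequence 5, 4^2, 3^3 of the paper's Theorem 2.) -/
/-- The vertices strictly between `a` and `b`, traversing the cycle `ZMod n`
from `a` towards `b` in the direction of increasing residues. -/
def Between (n : ℕ) (a b v : ZMod n) : Prop :=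
  0 < (v - a).val ∧ (v - a).val < (b - a).val

/-- `e` is an edge of the standard `n`-cycle on `ZMod n`. -/
def IsCycleEdge (n : ℕ) (e : Sym2 (ZMod n)) : Prop :=
  ∃ i : ZMod n, e = s(i, i + 1)

/-- A chord: an unordered pair of distinct vertices of `ZMod n` that is not an
edge of the standard `n`-cycle. -/
def IsChord (n : ℕ) (e : Sym2 (ZMod n)) : Prop :=
  ¬ e.IsDiag ∧ ¬ IsCycleEdge n e

/-- Two chords cross if exactly one endpoint of the second lies strictly between
the endpoints of the first (traversing in the direction of increasing residues). -/
def Cross (n : ℕ) (e f : Sym2 (ZMod n)) : Prop :=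
  ∀ a b c d : ZMod n, e = s(a, b) → f = s(c, d) →
    Xor' (Between n a b c) (Between n a b d)

/-- `S` is a set of pairwise non-crossing chords of the standard `n`-cycle. -/
def NonCrossingChords (n : ℕ) (S : Set (Sym2 (ZMod n))) : Prop :=
  (∀ e ∈ S, IsChord n e) ∧ ∀ e ∈ S, ∀ f ∈ S, e ≠ f → ¬ Cross n e f

/-- The chord graph of a set `S` of chords: the simple graph on `ZMod n`
whose edge set is `S`. -/
def chordGraph (n : ℕ) (S : Set (Sym2 (ZMod n))) : SimpleGraph (ZMod n) :=
  SimpleGraph.fromEdgeSet S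

/-- A vertex is chord-free for `S` if it is incident to no chord of `S`. -/
def ChordFree (n : ℕ) (S : Set (Sym2 (ZMod n))) (v : ZMod n) : Prop :=
  ∀ e ∈ S, v ∉ e

/-- An outerplane graph on `n` vertices: a simple graph on `ZMod n` whose edge
set is the (disjoint) union of the standard `n`-cycle and a set of pairwise
non-crossing chords. -/
def IsOuterplane (n : ℕ) (G : SimpleGraph (ZMod n)) : Prop :=
  ∃ S : Set (Sym2 (ZMod n)), NonCrossingChords n S ∧
    G.edgeSet = {e | IsCycleEdge n e} ∪ S

/-- The multiset of vertex degrees of a graph on a finite vertex type. -/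
noncomputable def degMultiset {V : Type*} [Fintype V] (G : SimpleGraph V) : Multiset ℕ := by
  classical exact Finset.univ.val.map fun v => G.degree v

/-- The multiset of vertex degrees of a graph on `ZMod n` (junk value for `n = 0`). -/
noncomputable def degreeMultiset (n : ℕ) (G : SimpleGraph (ZMod n)) : Multiset ℕ :=
  if h : n = 0 then 0
  else by haveI : NeZero n := ⟨h⟩; exact degMultiset G

/-- `M` is outerplane-unigraphic on `n` vertices: there is an outerplane graph on
`n` vertices with degree multiset `M`, and any two such are isomorphic. -/
def OuterplaneUnigraphic (n : ℕ) (M : Multiset ℕ) : Prop :=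
  (∃ G : SimpleGraph (ZMod n), IsOuterplane n G ∧ degreeMultiset n G = M) ∧
  ∀ G G' : SimpleGraph (ZMod n), IsOuterplane n G → IsOuterplane n G' →
    degreeMultiset n G = M → degreeMultiset n G' = M → Nonempty (G ≃g G')

/-- A caterpillar: a connected acyclic graph (tree) in which all vertices of
degree at least two lie on a common path. -/
def IsCaterpillar {V : Type*} (G : SimpleGraph V) : Prop :=
  G.Connected ∧ G.IsAcyclic ∧
    ∃ (u w : V) (p : G.Walk u w), p.IsPath ∧
      ∀ v : V, (∃ a b : V, a ≠ b ∧ G.Adj v a ∧ G.Adj v b) → v ∈ p.support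

/-- Pentagon with chords `{i, i+2}` for those `i` with `c i`. -/
def penta (c : ZMod 5 → Bool) : SimpleGraph (ZMod 5) where
  Adj x y := y = x + 1 ∨ x = y + 1 ∨ (y = x + 2 ∧ c x = true) ∨ (x = y + 2 ∧ c y = true)
  symm := ⟨fun x y h => by tauto⟩
  loopless := ⟨fun x h => by
    have h1 : ∀ x : ZMod 5, x ≠ x + 1 ∧ x ≠ x + 2 := by decide
    have := h1 x
    tauto⟩

instance (c : ZMod 5 → Bool) : DecidableRel (penta c).Adj := fun x y =>
  inferInstanceAs (Decidable (y = x + 1 ∨ x = y + 1 ∨ (y = x + 2 ∧ c x = true) ∨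
    (x = y + 2 ∧ c y = true)))

theorem penta_deg (c : ZMod 5 → Bool) :
    degreeMultiset 5 (penta c) = (Finset.univ : Finset (ZMod 5)).val.map
      (fun v => (penta c).degree v) := by
  unfold degreeMultiset degMultiset
  rw [dif_neg (by norm_num)]
  refine Multiset.map_congr rfl fun v _ => ?_
  convert rfl

theorem outer_eq (G : SimpleGraph (ZMod 5)) (h : IsOuterplane 5 G) :
    ∃ c, G = penta c := by
  classical
  obtain ⟨S, -, hE⟩ := h
  have hc : ∀ i, G.Adj i (i + 1) := fun i => by
    rw [← SimpleGraph.mem_edgeSet, hE]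
    exact Or.inl ⟨i, rfl⟩
  refine ⟨fun i => decide (G.Adj i (i + 2)), ?_⟩
  ext x y
  have key : ∀ x y : ZMod 5, x = y ∨ y = x + 1 ∨ x = y + 1 ∨ y = x + 2 ∨ x = y + 2 := by decide
  simp only [penta, decide_eq_true_eq]
  constructor
  · intro h
    have hne := h.ne
    have h' := h.symm
    rcases key x y with r | r | r | r | r
    · exact absurd r hne
    · exact Or.inl r
    · exact Or.inr (Or.inl r)
    · subst r; exact Or.inr (Or.inr (Or.inl ⟨rfl, h⟩))
    · subst r; exact Or.inr (Or.inr (Or.inr ⟨rfl, h'⟩))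
  · rintro (r | r | ⟨r, h⟩ | ⟨r, h⟩)
    · subst r; exact hc x
    · subst r; exact (hc y).symm
    · subst r; exact h
    · subst r; exact h.symm

/-- Explicit colouring. -/
def mkC (c0 c1 c2 c3 c4 : Bool) : ZMod 5 → Bool := fun j =>
  if j = 0 then c0 else if j = 1 then c1 else if j = 2 then c2 else if j = 3 then c3 else c4

theorem penta_one (c : ZMod 5 → Bool)
    (h : degreeMultiset 5 (penta c) = ({3, 3, 2, 2, 2} : Multiset ℕ)) :
    ∃ i, ∀ j, (c j = true ↔ j = i) := by
  rw [penta_deg] at h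
  have hc : c = mkC (c 0) (c 1) (c 2) (c 3) (c 4) := by
    funext j; fin_cases j <;> rfl
  generalize c 0 = c0 at hc
  generalize c 1 = c1 at hc
  generalize c 2 = c2 at hc
  generalize c 3 = c3 at hc
  generalize c 4 = c4 at hc
  subst hc
  revert c0 c1 c2 c3 c4
  decide +kernel

theorem penta_iso (c c' : ZMod 5 → Bool) (i i' : ZMod 5) (h : ∀ j, (c j = true ↔ j = i))
    (h' : ∀ j, (c' j = true ↔ j = i')) : Nonempty (penta c ≃g penta c') := by
  refine ⟨⟨Equiv.addRight (i' - i), ?_⟩⟩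
  intro a b
  simp only [penta, h, h', Equiv.coe_addRight]
  clear h h'
  revert a b i i'
  decide +kernel

/-- The exceptional unigraphic sequence `5, 4^2, 3^3` of the paper's Theorem 2:
the multiset `{3, 3, 2, 2, 2}` is outerplane-unigraphic on `5` vertices. -/
theorem unigraphic_exceptional_five :
    OuterplaneUnigraphic 5 ({3, 3, 2, 2, 2} : Multiset ℕ) := by
  refine ⟨⟨penta (fun j => decide (j = 0)), ⟨{s(0, 2)}, ⟨?_, ?_⟩, ?_⟩, ?_⟩, ?_⟩
  · rintro e rfl
    unfold IsChord IsCycleEdge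
    decide +kernel
  · rintro e rfl f rfl h
    exact absurd rfl h
  · ext e
    induction e with | _ x y
    simp only [SimpleGraph.mem_edgeSet, penta, IsCycleEdge, Set.mem_union, Set.mem_setOf_eq,
      Set.mem_singleton_iff, decide_eq_true_eq]
    revert x y
    decide +kernel
  · rw [penta_deg]
    decide +kernel
  · intro G G' hG hG' hd hd'
    obtain ⟨c, rfl⟩ := outer_eq G hG
    obtain ⟨c', rfl⟩ := outer_eq G' hG'
    obtain ⟨i, h⟩ := penta_one c hd
    obtain ⟨i', h'⟩ := penta_one c' hd'
    exact penta_iso c c' i i' h h'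
end

section
/- The multiset {4, 4, 4, 2, 2, 2} is outerplane-unigraphic on n = 6 vertices: there exists an outerplane graph on 6 vertices with degree multiset {4, 4, 4, 2, 2, 2} (the hexagon together with the three alternating chords forming a triangle), and any two outerplane graphs on 6 vertices with this degree multiset are isomorphic. (This is the exceptional unigraphic polytope degree sequence 6, 5^3, 3^3 of the paper's Theorem 2.) -/
instance decXor6 (p q : Prop) [Decidable p] [Decidable q] : Decidable (Xor p q) :=
  inferInstanceAs (Decidable ((p ∧ ¬ q) ∨ (q ∧ ¬ p)))

instance decBetween6 (a b v : ZMod 6) : Decidable (Between 6 a b v) := by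
  unfold Between; infer_instance

/-- The hexagon with a triangle of chords on the even vertices. -/
def hexT : SimpleGraph (ZMod 6) where
  Adj x y := y = x + 1 ∨ x = y + 1 ∨ (x ≠ y ∧ x.val % 2 = 0 ∧ y.val % 2 = 0)
  symm := ⟨by decide⟩
  loopless := ⟨by decide⟩

instance hexTdec : DecidableRel hexT.Adj := fun x y => by
  unfold hexT; infer_instance

theorem degM_eq (G : SimpleGraph (ZMod 6)) [DecidableRel G.Adj] :
    degreeMultiset 6 G = (Finset.univ : Finset (ZMod 6)).val.map
      fun v => ((Finset.univ : Finset (ZMod 6)).filter fun w => G.Adj v w).card := by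
  unfold degreeMultiset degMultiset
  rw [dif_neg (by norm_num)]
  have hF : ∀ i1 i2 : Fintype (ZMod 6), i1 = i2 := fun _ _ => Subsingleton.elim _ _
  rw [hF (@ZMod.fintype 6 _) (@ZMod.fintype 6 _)]
  refine Multiset.map_congr rfl fun v _ => ?_
  rw [← SimpleGraph.card_neighborFinset_eq_degree]
  congr 1
  ext w
  simp

theorem cyc_iff (x y : ZMod 6) : IsCycleEdge 6 s(x, y) ↔ (y = x + 1 ∨ x = y + 1) := by
  unfold IsCycleEdge
  constructor
  · rintro ⟨i, h⟩
    rcases Sym2.eq_iff.1 h with ⟨rfl, rfl⟩ | ⟨rfl, rfl⟩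
    · exact Or.inl rfl
    · exact Or.inr rfl
  · rintro (rfl | rfl)
    · exact ⟨x, rfl⟩
    · exact ⟨y, Sym2.eq_swap⟩

theorem cross_mk (a b c d : ZMod 6)
    (h : Xor (Between 6 a b c) (Between 6 a b d) ∧ Xor (Between 6 b a c) (Between 6 b a d)) :
    Cross 6 s(a, b) s(c, d) := by
  intro a' b' c' d' h1 h2
  rcases Sym2.eq_iff.1 h1 with ⟨rfl, rfl⟩ | ⟨rfl, rfl⟩ <;>
  rcases Sym2.eq_iff.1 h2 with ⟨rfl, rfl⟩ | ⟨rfl, rfl⟩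
  · exact h.1
  · exact (xor_comm _ _).mp h.1
  · exact h.2
  · exact (xor_comm _ _).mp h.2

theorem outer_nc {G : SimpleGraph (ZMod 6)} (hG : IsOuterplane 6 G) (a b c d : ZMod 6)
    (h : (Xor (Between 6 a b c) (Between 6 a b d) ∧ Xor (Between 6 b a c) (Between 6 b a d))
      ∧ ¬ (b = a + 1 ∨ a = b + 1) ∧ ¬ (d = c + 1 ∨ c = d + 1) ∧ s(a, b) ≠ s(c, d)) :
    ¬ (G.Adj a b ∧ G.Adj c d) := by
  obtain ⟨S, ⟨_, hS⟩, hE⟩ := hG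
  rintro ⟨h1, h2⟩
  rw [← SimpleGraph.mem_edgeSet, hE] at h1 h2
  obtain ⟨hc, n1, n2, hne⟩ := h
  have m1 := h1.resolve_left (fun h => n1 ((cyc_iff _ _).1 h))
  have m2 := h2.resolve_left (fun h => n2 ((cyc_iff _ _).1 h))
  exact hS _ m1 _ m2 hne (cross_mk _ _ _ _ hc)

theorem outer_cyc {G : SimpleGraph (ZMod 6)} (hG : IsOuterplane 6 G) (a b : ZMod 6)
    (h : b = a + 1 ∨ a = b + 1) : G.Adj a b := by
  obtain ⟨S, _, hE⟩ := hG
  rw [← SimpleGraph.mem_edgeSet, hE]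
  exact Or.inl ((cyc_iff _ _).2 h)

set_option synthInstance.maxHeartbeats 400000 in
set_option synthInstance.maxSize 2000 in
theorem bool_key : ∀ p q r s t u v w x : Bool,
    -- p=02 q=03 r=04 s=13 t=14 u=15 v=24 w=25 x=35
    (!(p && s) && !(p && t) && !(p && u) && !(q && t) && !(q && u) && !(q && v) && !(q && w)
      && !(r && u) && !(r && w) && !(r && x) && !(s && v) && !(s && w) && !(t && w) && !(t && x)
      && !(v && x)) = true →
    ([2 + p.toNat + q.toNat + r.toNat, 2 + s.toNat + t.toNat + u.toNat,
      2 + p.toNat + v.toNat + w.toNat, 2 + q.toNat + s.toNat + x.toNat,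
      2 + r.toNat + t.toNat + v.toNat, 2 + u.toNat + w.toNat + x.toNat] : Multiset ℕ)
      = ([4, 4, 4, 2, 2, 2] : List ℕ) →
    (p = true ∧ q = false ∧ r = true ∧ s = false ∧ t = false ∧ u = false ∧ v = true ∧ w = false
      ∧ x = false) ∨
    (p = false ∧ q = false ∧ r = false ∧ s = true ∧ t = false ∧ u = true ∧ v = false ∧ w = false
      ∧ x = true) := by
  decide +kernel

set_option maxHeartbeats 2000000 in
theorem iso_hexT (G : SimpleGraph (ZMod 6)) (hG : IsOuterplane 6 G)
    (hd : degreeMultiset 6 G = ({4, 4, 4, 2, 2, 2} : Multiset ℕ)) : Nonempty (G ≃g hexT) := by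
  have : DecidableRel G.Adj := Classical.decRel _
  have cy := outer_cyc hG
  have nc := outer_nc hG
  have key := bool_key (decide (G.Adj 0 2)) (decide (G.Adj 0 3)) (decide (G.Adj 0 4))
    (decide (G.Adj 1 3)) (decide (G.Adj 1 4)) (decide (G.Adj 1 5)) (decide (G.Adj 2 4))
    (decide (G.Adj 2 5)) (decide (G.Adj 3 5))
  have n1 := nc 0 2 1 3 (by decide)
  have n2 := nc 0 2 1 4 (by decide)
  have n3 := nc 0 2 1 5 (by decide)
  have n4 := nc 0 3 1 4 (by decide)
  have n5 := nc 0 3 1 5 (by decide)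
  have n6 := nc 0 3 2 4 (by decide)
  have n7 := nc 0 3 2 5 (by decide)
  have n8 := nc 0 4 1 5 (by decide)
  have n9 := nc 0 4 2 5 (by decide)
  have n10 := nc 0 4 3 5 (by decide)
  have n11 := nc 1 3 2 4 (by decide)
  have n12 := nc 1 3 2 5 (by decide)
  have n13 := nc 1 4 2 5 (by decide)
  have n14 := nc 1 4 3 5 (by decide)
  have n15 := nc 2 4 3 5 (by decide)
  have c0 := cy 0 1 (by decide)
  have c1 := cy 1 2 (by decide)
  have c2 := cy 2 3 (by decide)
  have c3 := cy 3 4 (by decide)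
  have c4 := cy 4 5 (by decide)
  have c5 := cy 0 5 (by decide)
  have hU : (Finset.univ : Finset (ZMod 6)).val = (([0, 1, 2, 3, 4, 5] : List (ZMod 6)) : Multiset (ZMod 6)) := by
    decide
  have hsum : ∀ f : ZMod 6 → ℕ, ∑ w, f w = f 0 + f 1 + f 2 + f 3 + f 4 + f 5 := fun f =>
    Fin.sum_univ_six (M := ℕ) f
  have s10 := G.adj_comm 1 0
  have s20 := G.adj_comm 2 0
  have s30 := G.adj_comm 3 0
  have s40 := G.adj_comm 4 0
  have s50 := G.adj_comm 5 0
  have s21 := G.adj_comm 2 1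
  have s31 := G.adj_comm 3 1
  have s41 := G.adj_comm 4 1
  have s51 := G.adj_comm 5 1
  have s32 := G.adj_comm 3 2
  have s42 := G.adj_comm 4 2
  have s52 := G.adj_comm 5 2
  have s43 := G.adj_comm 4 3
  have s53 := G.adj_comm 5 3
  have s54 := G.adj_comm 5 4
  have hb : ∀ P : Prop, ∀ [Decidable P], (decide P).toNat = if P then 1 else 0 := by
    intro P _; by_cases h : P <;> simp [h]
  have key2 := key (by
      simp only [Bool.and_eq_true, Bool.not_eq_true', Bool.and_eq_false_imp, decide_eq_true_eq,
        decide_eq_false_iff_not]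
      repeat' apply And.intro
      exacts [not_and.1 n1, not_and.1 n2, not_and.1 n3, not_and.1 n4, not_and.1 n5, not_and.1 n6, not_and.1 n7, not_and.1 n8, not_and.1 n9, not_and.1 n10, not_and.1 n11, not_and.1 n12, not_and.1 n13, not_and.1 n14, not_and.1 n15]) (by
      rw [degM_eq, hU] at hd
      simp only [Multiset.map_coe, List.map, Finset.card_filter, hsum, s10, s20, s30, s40, s50,
        s21, s31, s41, s51, s32, s42, s52, s43, s53, s54, c0, c1, c2, c3, c4, c5,
        SimpleGraph.irrefl, if_true, if_false] at hd
      simp only [hb]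
      refine Eq.trans ?_ hd
      congr 1
      simp only [List.cons.injEq, and_true]
      refine ⟨?_, ?_, ?_, ?_, ?_, ?_⟩
      all_goals first | trivial | omega)
  clear key hd
  have hall : ∀ P : ZMod 6 → Prop, P 0 → P 1 → P 2 → P 3 → P 4 → P 5 → ∀ x, P x := by
    intro P h0 h1 h2 h3 h4 h5 x
    have : x = 0 ∨ x = 1 ∨ x = 2 ∨ x = 3 ∨ x = 4 ∨ x = 5 := by revert x; decide
    rcases this with rfl | rfl | rfl | rfl | rfl | rfl <;> assumption
  simp only [decide_eq_true_eq, decide_eq_false_iff_not] at key2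
  rcases key2 with ⟨k1, k2, k3, k4, k5, k6, k7, k8, k9⟩ | ⟨k1, k2, k3, k4, k5, k6, k7, k8, k9⟩
  · suffices H : ∀ a b : ZMod 6, hexT.Adj a b ↔ G.Adj a b from
      ⟨⟨Equiv.refl _, H _ _⟩⟩
    refine hall _ ?_ ?_ ?_ ?_ ?_ ?_ <;> refine hall _ ?_ ?_ ?_ ?_ ?_ ?_ <;>
      simp only [s10, s20, s30, s40, s50,
        s21, s31, s41, s51, s32, s42, s52, s43, s53, s54, c0, c1, c2, c3, c4, c5,
        k1, k2, k3, k4, k5, k6, k7, k8, k9, SimpleGraph.irrefl] <;> decide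
  · suffices H : ∀ a b : ZMod 6, hexT.Adj (a + 1) (b + 1) ↔ G.Adj a b from
      ⟨⟨Equiv.addRight 1, H _ _⟩⟩
    refine hall _ ?_ ?_ ?_ ?_ ?_ ?_ <;> refine hall _ ?_ ?_ ?_ ?_ ?_ ?_ <;>
      simp only [s10, s20, s30, s40, s50,
        s21, s31, s41, s51, s32, s42, s52, s43, s53, s54, c0, c1, c2, c3, c4, c5,
        k1, k2, k3, k4, k5, k6, k7, k8, k9, SimpleGraph.irrefl] <;> decide

set_option synthInstance.maxHeartbeats 400000 in
set_option synthInstance.maxSize 2000 in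
theorem hexT_outer : IsOuterplane 6 hexT := by
  have hnc : ∀ a b c d : ZMod 6, hexT.Adj a b → hexT.Adj c d →
      ¬ (b = a + 1 ∨ a = b + 1) → ¬ (d = c + 1 ∨ c = d + 1) →
      ¬ (Xor (Between 6 a b c) (Between 6 a b d) ∧ Xor (Between 6 b a c) (Between 6 b a d)) := by
    decide +kernel
  refine ⟨hexT.edgeSet \ {e | IsCycleEdge 6 e}, ⟨?_, ?_⟩, ?_⟩
  · rintro e ⟨h1, h2⟩
    exact ⟨hexT.not_isDiag_of_mem_edgeSet h1, h2⟩
  · intro e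
    induction e using Sym2.ind with | _ a b
    intro he f
    induction f using Sym2.ind with | _ c d
    intro hf _ hc
    refine hnc a b c d he.1 hf.1 (fun h => he.2 ((cyc_iff _ _).2 h))
      (fun h => hf.2 ((cyc_iff _ _).2 h)) ⟨hc a b c d rfl rfl, hc b a c d Sym2.eq_swap rfl⟩
  · rw [Set.union_sdiff_self, Set.union_eq_self_of_subset_left]
    rintro e ⟨i, rfl⟩
    exact Or.inl rfl

theorem hexT_deg : degreeMultiset 6 hexT = ({4, 4, 4, 2, 2, 2} : Multiset ℕ) := by
  rw [degM_eq]
  decide +kernel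

/-- The exceptional unigraphic sequence `6, 5^3, 3^3` of the paper's Theorem 2:
the multiset `{4, 4, 4, 2, 2, 2}` is outerplane-unigraphic on `6` vertices. -/
theorem unigraphic_exceptional_six :
    OuterplaneUnigraphic 6 ({4, 4, 4, 2, 2, 2} : Multiset ℕ) := by
  refine ⟨⟨hexT, hexT_outer, hexT_deg⟩, fun G G' h h' d d' => ?_⟩
  obtain ⟨e⟩ := iso_hexT G h d
  obtain ⟨e'⟩ := iso_hexT G' h' d'
  exact ⟨e.trans e'.symm⟩
end

section
/- Let n ≥ 3 and let S be a nonempty set of pairwise non-crossing chords of the standard n-cycle. Then at least two vertices of ZMod n are chord-free for S, i.e. incident to no chord of S. (This is the first assertion of the paper's Lemma 2: a 3-polytope of radius 1 has at least two vertices of degree three.) -/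
theorem aux_val_sub (n : ℕ) [NeZero n] (x y : ZMod n) :
    (x.val : ℤ) < n ∧ (y.val : ℤ) < n ∧ (((x - y).val : ℤ) = if y.val ≤ x.val then (x.val : ℤ) - y.val else n + x.val - y.val) := by
  have hx := ZMod.val_lt x
  have hy := ZMod.val_lt y
  refine ⟨by omega, by omega, ?_⟩
  split_ifs with h
  · rw [ZMod.val_sub h]; omega
  · have h1 : (y - x).val = y.val - x.val := ZMod.val_sub (by omega)
    have h2 : y - x ≠ 0 := by
      intro h0
      rw [h0, ZMod.val_zero] at h1
      omega
    have h3 : x - y = -(y - x) := by ring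
    have : NeZero (y - x) := ⟨h2⟩
    rw [h3, ZMod.val_neg_of_ne_zero, h1]
    omega

theorem aux_val_pos (n : ℕ) [NeZero n] (x y : ZMod n) (h : x ≠ y) : 0 < (x - y).val := by
  have : (x - y).val ≠ 0 := by
    rw [Ne, ZMod.val_eq_zero, sub_eq_zero]; exact h
  omega

theorem aux_between_swap (n : ℕ) [NeZero n] (a b v : ZMod n) (hab : a ≠ b) (hva : v ≠ a)
    (hvb : v ≠ b) : Between n b a v ↔ ¬ Between n a b v := by
  unfold Between
  obtain ⟨h1, h2, h3⟩ := aux_val_sub n (v - a) (b - a)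
  obtain ⟨h4, h5, h6⟩ := aux_val_sub n 0 (b - a)
  rw [show v - a - (b - a) = v - b by ring] at h3
  rw [show 0 - (b - a) = a - b by ring] at h6
  have p1 := aux_val_pos n v a hva
  have p2 := aux_val_pos n v b hvb
  have p3 := aux_val_pos n b a hab.symm
  have p4 := aux_val_pos n a b hab
  simp only [ZMod.val_zero] at h6
  split_ifs at h3 h6 <;> omega

theorem aux_key (n : ℕ) (hn : 3 ≤ n) (S : Set (Sym2 (ZMod n)))
    (hS : NonCrossingChords n S) (k : ℕ) : ∀ a b : ZMod n, s(a, b) ∈ S → (b - a).val = k →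
    ∃ v, Between n a b v ∧ ChordFree n S v := by
  have : NeZero n := ⟨by omega⟩
  have : Fact (1 < n) := ⟨by omega⟩
  induction k using Nat.strong_induction_on with
  | _ k ih =>
  intro a b hab hk
  have one_val : ((1 : ZMod n)).val = 1 := ZMod.val_one n
  obtain ⟨hd, hc⟩ := hS.1 _ hab
  have hne : a ≠ b := by simpa using hd
  have hb1 : b ≠ a + 1 := fun h => hc ⟨a, by rw [h]⟩
  have p1 := aux_val_pos n b a hne.symm
  have p2 := aux_val_pos n b (a + 1) hb1
  obtain ⟨h1, h2, h3⟩ := aux_val_sub n (b - a) 1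
  rw [show b - a - 1 = b - (a + 1) by ring, one_val] at h3
  have hcb : Between n a b (a + 1) := by
    unfold Between
    rw [show a + 1 - a = 1 by ring, one_val]
    split_ifs at h3 <;> omega
  by_cases hf : ChordFree n S (a + 1)
  · exact ⟨_, hcb, hf⟩
  unfold ChordFree at hf
  push Not at hf
  obtain ⟨e, he, hv⟩ := hf
  obtain ⟨d, rfl⟩ := hv
  obtain ⟨hd', hc'⟩ := hS.1 _ he
  have hd1 : a + 1 ≠ d := by simpa using hd'
  have hda : d ≠ a := fun h => hc' ⟨a, by rw [h, Sym2.eq_swap]⟩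
  have hca : a + 1 ≠ a := by simp
  have hdb : d = b ∨ Between n a b d := by
    by_contra! hcon
    obtain ⟨hdb, hnb⟩ := hcon
    refine hS.2 _ hab _ he ?_ ?_
    · intro h
      have : a + 1 ∈ s(a, b) := by rw [h]; simp
      rw [Sym2.mem_iff] at this
      rcases this with h | h
      · exact hca h
      · exact hb1 h.symm
    · intro x y z w h1 h2
      have s1 := aux_between_swap n a b d hne hda hdb
      have s2 := aux_between_swap n a b (a + 1) hne hca hb1.symm
      rw [Sym2.eq_iff] at h1 h2
      rcases h1 with ⟨rfl, rfl⟩ | ⟨rfl, rfl⟩ <;> rcases h2 with ⟨rfl, rfl⟩ | ⟨rfl, rfl⟩ <;>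
        simp only [Xor'] <;> tauto
  obtain ⟨g1, g2, g3⟩ := aux_val_sub n (d - a) 1
  rw [show d - a - 1 = d - (a + 1) by ring, one_val] at g3
  have q1 := aux_val_pos n d a hda
  have hle : (d - a).val ≤ (b - a).val := by
    rcases hdb with rfl | h
    · exact le_rfl
    · exact h.2.le
  obtain ⟨v, hv, hvf⟩ := ih (d - (a + 1)).val (by split_ifs at g3 <;> omega) (a + 1) d he rfl
  refine ⟨v, ?_, hvf⟩
  unfold Between at hv ⊢
  obtain ⟨f1, f2, f3⟩ := aux_val_sub n (v - a) 1
  rw [show v - a - 1 = v - (a + 1) by ring, one_val] at f3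
  split_ifs at g3 f3 <;> omega

theorem two_chord_free (n : ℕ) (hn : 3 ≤ n) (S : Set (Sym2 (ZMod n)))
    (hS : NonCrossingChords n S) (hne : S.Nonempty) :
    ∃ v w : ZMod n, v ≠ w ∧ ChordFree n S v ∧ ChordFree n S w := by
  have : NeZero n := ⟨by omega⟩
  obtain ⟨e, he⟩ := hne
  induction e using Sym2.ind with
  | _ a b =>
  have hab : a ≠ b := by simpa using (hS.1 _ he).1
  obtain ⟨v, hv, hvf⟩ := aux_key n hn S hS _ a b he rfl
  obtain ⟨w, hw, hwf⟩ := aux_key n hn S hS _ b a (by rwa [Sym2.eq_swap]) rfl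
  refine ⟨v, w, ?_, hvf, hwf⟩
  rintro rfl
  have h1 : v ≠ a := by rintro rfl; simp [Between] at hv
  have h2 : v ≠ b := by rintro rfl; simp [Between] at hv
  exact (aux_between_swap n a b v hab h1 h2).1 hw hv
end

section
/- Let n ≥ 3, let S be a set of pairwise non-crossing chords of the standard n-cycle, and suppose the chord graph of S contains a cycle of length i (i ≥ 3). Then at least i vertices of ZMod n are chord-free for S. (This is the single-block case of the paper's Lemma 2: if the chord graph of a radius-1 3-polytope contains an i-cycle, the polytope has at least i vertices of degree three.) -/
theorem chord_btw_iff (n : ℕ) [NeZero n] (a b v : ZMod n) : Between n a b v ↔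
    (a.val < v.val ∧ v.val < b.val) ∨ (b.val < a.val ∧ a.val < v.val) ∨
    (b.val < a.val ∧ v.val < b.val) := by
  have key : ∀ x y : ZMod n, ((x - y).val = if y.val ≤ x.val then x.val - y.val
      else x.val + n - y.val) := by
    intro x y
    split_ifs with h
    · exact ZMod.val_sub h
    · have h1 := ZMod.val_sub (a := y) (b := x) (by omega)
      have h2 : x - y = -(y - x) := by ring
      have h3 : y - x ≠ 0 := by
        intro h0
        rw [h0] at h1
        simp at h1
        omega
      haveI : NeZero (y - x) := ⟨h3⟩
      rw [h2, ZMod.val_neg_of_ne_zero, h1]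
      have := ZMod.val_lt y
      omega
  unfold Between
  rw [key, key]
  have := ZMod.val_lt a
  have := ZMod.val_lt b
  have := ZMod.val_lt v
  split_ifs <;> omega

theorem vne {n : ℕ} [NeZero n] {a b : ZMod n} (h : a ≠ b) : a.val ≠ b.val :=
  fun h' => h (ZMod.val_injective n h')

theorem btw_swap (n : ℕ) [NeZero n] {a b v : ZMod n} (hab : a ≠ b) (ha : v ≠ a) (hb : v ≠ b) :
    Between n b a v ↔ ¬ Between n a b v := by
  rw [chord_btw_iff, chord_btw_iff]
  have := vne hab
  have := vne ha
  have := vne hb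
  omega

theorem same_side (n : ℕ) [NeZero n] {S : Set (Sym2 (ZMod n))} (hS : NonCrossingChords n S)
    {a b c d : ZMod n} (h1 : s(a, b) ∈ S) (h2 : s(c, d) ∈ S) (hca : c ≠ a) (hcb : c ≠ b)
    (hda : d ≠ a) (hdb : d ≠ b) : Between n a b c ↔ Between n a b d := by
  have hab : a ≠ b := by
    have := (hS.1 _ h1).1
    simpa using this
  have hne : s(a, b) ≠ s(c, d) := by
    intro h
    rw [Sym2.eq_iff] at h
    grind
  have hx := hS.2 _ h1 _ h2 hne
  by_contra hcon
  apply hx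
  intro a' b' c' d' e1 e2
  have s1 := btw_swap n hab hca hcb
  have s2 := btw_swap n hab hda hdb
  rw [Sym2.eq_iff] at e1 e2
  change Xor _ _
  rw [xor_iff_not_iff]
  rcases e1 with ⟨rfl, rfl⟩ | ⟨rfl, rfl⟩ <;> rcases e2 with ⟨rfl, rfl⟩ | ⟨rfl, rfl⟩ <;> tauto

theorem exists_free (n : ℕ) (hn : 3 ≤ n) [NeZero n] {S : Set (Sym2 (ZMod n))}
    (hS : NonCrossingChords n S) (m : ℕ) : ∀ a b : ZMod n, (b - a).val ≤ m → s(a, b) ∈ S →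
    ∃ z, Between n a b z ∧ ChordFree n S z := by
  induction m with
  | zero =>
    intro a b h hab
    have h1 := (hS.1 _ hab).1
    have : b - a = 0 := by
      rw [← ZMod.val_eq_zero]; omega
    rw [sub_eq_zero] at this
    simp [this] at h1
  | succ m ih =>
    intro a b h hab
    have h1 := (hS.1 _ hab)
    have hne : a ≠ b := by simpa using h1.1
    have hv1 : (1 : ZMod n).val = 1 := by
      haveI : Fact (1 < n) := ⟨by omega⟩
      exact ZMod.val_one n
    have hb1 : a + 1 ≠ b := fun h' => h1.2 ⟨a, by rw [h']⟩
    have ha1 : a + 1 ≠ a := by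
      intro h'
      have : (1 : ZMod n) = 0 := by simpa using h'
      rw [this] at hv1
      simp at hv1
    have e1 : (a + 1 - a).val = 1 := by
      rw [add_sub_cancel_left, hv1]
    have hbt : Between n a b (a + 1) := by
      unfold Between
      rw [e1]
      have hp : (b - a).val ≠ 0 := by
        rw [Ne, ZMod.val_eq_zero, sub_eq_zero]; exact hne.symm
      have hq : (b - a).val ≠ 1 := by
        intro h'
        rw [← hv1] at h'
        have := ZMod.val_injective n h'
        apply hb1
        rw [← this]; ring
      omega
    by_cases hf : ChordFree n S (a + 1)
    · exact ⟨_, hbt, hf⟩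
    unfold ChordFree at hf
    push Not at hf
    obtain ⟨e, he, hm⟩ := hf
    obtain ⟨d, rfl⟩ := Sym2.mem_iff_exists.1 hm
    have h2 := hS.1 _ he
    have hda : d ≠ a := by
      rintro rfl
      exact h2.2 ⟨d, Sym2.eq_swap⟩
    have hd1 : a + 1 ≠ d := by simpa using h2.1
    have hdm : d = b ∨ Between n a b d := by
      by_cases hdb : d = b
      · exact Or.inl hdb
      · exact Or.inr ((same_side n hS hab he ha1 hb1 hda hdb).1 hbt)
    have hle : (d - a).val ≤ (b - a).val := by
      rcases hdm with rfl | h'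
      · exact le_rfl
      · exact h'.2.le
    have hsub : ∀ x : ZMod n, x ≠ a → (x - (a + 1)).val = (x - a).val - 1 := by
      intro x hx
      have hp : (x - a).val ≠ 0 := by
        rw [Ne, ZMod.val_eq_zero, sub_eq_zero]; exact hx
      rw [← sub_sub, ZMod.val_sub (by omega), hv1]
    have hp : (d - a).val ≠ 0 := by
      rw [Ne, ZMod.val_eq_zero, sub_eq_zero]; exact hda
    obtain ⟨z, hz, hzf⟩ := ih (a + 1) d (by rw [hsub d hda]; omega) he
    refine ⟨z, ?_, hzf⟩
    have hno : ¬ Between n a (a + 1) d := by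
      unfold Between
      rw [e1]
      omega
    rw [chord_btw_iff] at hz hbt hno ⊢
    have := vne hda
    have := vne hd1
    have := vne hne
    rcases hdm with rfl | h'
    · omega
    · rw [chord_btw_iff] at h'
      omega

theorem arc_unique (n : ℕ) [NeZero n] {a b a' b' z : ZMod n} (h1 : Between n a b z)
    (h2 : Between n a' b' z) (ha : ¬ Between n a b a') (hb : ¬ Between n a b b')
    (ha' : ¬ Between n a' b' a) (hb' : ¬ Between n a' b' b) : a = a' ∧ b = b' := by
  rw [chord_btw_iff] at *
  constructor <;> apply ZMod.val_injective n <;> omega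

theorem core (n : ℕ) (hn : 3 ≤ n) [NeZero n] {S : Set (Sym2 (ZMod n))}
    (hS : NonCrossingChords n S) (i : ℕ) (hi : 3 ≤ i) (f : ℕ → ZMod n)
    (hf : ∀ j k, f j = f k ↔ j % i = k % i) (hadj : ∀ k, s(f k, f (k + 1)) ∈ S) :
    i ≤ {u : ZMod n | ChordFree n S u}.ncard := by
  have hmod : ∀ k d, d < i → 0 < d → f (k + d) ≠ f k := by
    intro k d h1 h2 h
    rw [hf] at h
    have h' : (k + d) ≡ k + 0 [MOD i] := h
    have := Nat.ModEq.add_left_cancel' k h'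
    have := Nat.ModEq.eq_of_lt_of_lt this h1 (by omega)
    omega
  have side : ∀ k d, d + 2 < i → (Between n (f k) (f (k + 1)) (f (k + 2)) ↔
      Between n (f k) (f (k + 1)) (f (k + 2 + d))) := by
    intro k d
    induction d with
    | zero => intro _; rfl
    | succ d ih =>
      intro h
      rw [ih (by omega)]
      have a1 := hmod k (2 + d) (by omega) (by omega)
      have a2 := hmod (k + 1) (1 + d) (by omega) (by omega)
      have a3 := hmod k (3 + d) (by omega) (by omega)
      have a4 := hmod (k + 1) (2 + d) (by omega) (by omega)
      apply same_side n hS (hadj k) (hadj _)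
      · convert a1 using 2; ring
      · convert a2 using 2; ring
      · convert a3 using 2; ring
      · convert a4 using 2; ring
  have rep : ∀ k j, f j = f k ∨ f j = f (k + 1) ∨ ∃ d, d + 2 < i ∧ f j = f (k + 2 + d) := by
    intro k j
    obtain ⟨r, hr, hj⟩ : ∃ r, r < i ∧ f j = f (k + r) := by
      refine ⟨(j + (i - k % i)) % i, Nat.mod_lt _ (by omega), ?_⟩
      rw [hf, Nat.add_mod_mod]
      have hk := Nat.mod_lt k (show 0 < i by omega)
      have : k + (j + (i - k % i)) = j + i * (k / i + 1) := by
        have := Nat.div_add_mod k i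
        have e : i * (k / i + 1) = i * (k / i) + i := by ring
        omega
      rw [this, Nat.add_mul_mod_self_left]
    rcases r with _ | _ | r
    · exact Or.inl hj
    · exact Or.inr (Or.inl hj)
    · refine Or.inr (Or.inr ⟨r, hr, ?_⟩)
      rw [hj]; congr 1; ring
  have nl : ∀ a b : ZMod n, ¬ Between n a b a := by
    intro a b; rw [chord_btw_iff]; omega
  have nr : ∀ a b : ZMod n, ¬ Between n a b b := by
    intro a b; rw [chord_btw_iff]; omega
  have arc : ∀ k, ∃ p q, s(p, q) = s(f k, f (k + 1)) ∧ ∀ j, ¬ Between n p q (f j) := by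
    intro k
    by_cases hb : Between n (f k) (f (k + 1)) (f (k + 2))
    · refine ⟨f (k + 1), f k, Sym2.eq_swap, ?_⟩
      intro j
      rcases rep k j with h | h | ⟨d, hd, h⟩
      · rw [h]; exact nr _ _
      · rw [h]; exact nl _ _
      · rw [h]
        have := (side k d hd).1 hb
        rw [chord_btw_iff] at this ⊢
        omega
    · refine ⟨f k, f (k + 1), rfl, ?_⟩
      intro j
      rcases rep k j with h | h | ⟨d, hd, h⟩
      · rw [h]; exact nl _ _
      · rw [h]; exact nr _ _
      · rw [h, ← side k d hd]; exact hb
  choose p q hpq hemp using arc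
  have hz : ∀ k, ∃ z, Between n (p k) (q k) z ∧ ChordFree n S z := fun k =>
    exists_free n hn hS _ (p k) (q k) le_rfl (by rw [hpq]; exact hadj k)
  choose z hz1 hz2 using hz
  have hpf : ∀ k, (∃ j, p k = f j) ∧ (∃ j, q k = f j) := by
    intro k
    have := hpq k
    rw [Sym2.eq_iff] at this
    rcases this with ⟨h1, h2⟩ | ⟨h1, h2⟩
    · exact ⟨⟨_, h1⟩, ⟨_, h2⟩⟩
    · exact ⟨⟨_, h1⟩, ⟨_, h2⟩⟩
  have hinj : Set.InjOn z (Finset.range i : Set ℕ) := by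
    intro k hk l hl hkl
    have hk' : k < i := by simpa using hk
    have hl' : l < i := by simpa using hl
    obtain ⟨⟨j1, e1⟩, ⟨j2, e2⟩⟩ := hpf k
    obtain ⟨⟨j3, e3⟩, ⟨j4, e4⟩⟩ := hpf l
    have := arc_unique n (hz1 k) (hkl ▸ hz1 l) (e3 ▸ hemp k j3) (e4 ▸ hemp k j4)
      (e1 ▸ hemp l j1) (e2 ▸ hemp l j2)
    have h := hpq k
    rw [this.1, this.2, hpq l, Sym2.eq_iff] at h
    rcases h with ⟨h, -⟩ | ⟨h, h'⟩
    · rw [hf, Nat.mod_eq_of_lt hk', Nat.mod_eq_of_lt hl'] at h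
      exact h.symm
    · exfalso
      rw [hf] at h h'
      have : f (k + 2) = f k := by
        rw [hf, ← h', Nat.add_mod l, h, ← Nat.add_mod]
      exact hmod k 2 (by omega) (by omega) this
  have : ((Finset.range i).image z : Finset (ZMod n)).card = i := by
    rw [Finset.card_image_of_injOn hinj, Finset.card_range]
  rw [← this, ← Set.ncard_coe_finset]
  apply Set.ncard_le_ncard _ (Set.toFinite _)
  intro u hu
  simp only [Finset.coe_image, Set.mem_image] at hu
  obtain ⟨k, -, rfl⟩ := hu
  exact hz2 k

/-- Single-block case of the paper's Lemma 2: if the chord graph of a set of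
pairwise non-crossing chords contains a cycle of length `i ≥ 3`, then at least
`i` vertices are chord-free. -/
theorem chord_free_of_cycle (n : ℕ) (hn : 3 ≤ n) (S : Set (Sym2 (ZMod n)))
    (hS : NonCrossingChords n S) (i : ℕ) (hi : 3 ≤ i)
    (v : ZMod n) (c : (chordGraph n S).Walk v v)
    (hc : c.IsCycle) (hlen : c.length = i) :
    i ≤ {u : ZMod n | ChordFree n S u}.ncard := by
  haveI : NeZero n := ⟨by omega⟩
  subst hlen
  have hsucc : ∀ k, c.getVert ((k + 1) % c.length) = c.getVert (k % c.length + 1) := by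
    intro k
    have hlt := Nat.mod_lt k (show 0 < c.length by omega)
    rw [← Nat.mod_add_mod]
    rcases Nat.lt_or_ge (k % c.length + 1) c.length with h | h
    · rw [Nat.mod_eq_of_lt h]
    · have : k % c.length + 1 = c.length := by omega
      rw [this]; simp
  refine core n hn hS c.length hi (fun k => c.getVert (k % c.length)) ?_ ?_
  · intro j k
    refine ⟨fun h => ?_, fun h => by simp only [h]⟩
    have h1 := Nat.mod_lt j (show 0 < c.length by omega)
    have h2 := Nat.mod_lt k (show 0 < c.length by omega)
    exact hc.getVert_injOn' (by simp only [Set.mem_setOf_eq]; omega)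
      (by simp only [Set.mem_setOf_eq]; omega) h
  · intro k
    have hlt := Nat.mod_lt k (show 0 < c.length by omega)
    have := c.adj_getVert_succ hlt
    simp only [hsucc]
    unfold chordGraph at this
    rw [SimpleGraph.fromEdgeSet_adj] at this
    exact this.1
end

section
/- Let n ≥ 3, let S be a nonempty set of pairwise non-crossing chords of the standard n-cycle, and suppose the chord graph of S contains k ≥ 1 pairwise vertex-disjoint cycles, of lengths i_1, …, i_k (each i_j ≥ 3). Then the number of vertices of ZMod n that are chord-free for S is at least 2 + Σ_{j=1}^{k} (i_j − 2). (This is a block-free rendition of the paper's Lemma 2, which states that the number a of degree-three vertices of a radius-1 3-polytope satisfies a ≥ 2 + Σ_{i≥3} (i−2)·B_G(i), where B_G(i) is the number of blocks of the chord graph bounded by an i-cycle.) -/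
structure CPoly (G : SimpleGraph ℕ) (C : Finset ℕ) : Prop where
  card : 3 ≤ C.card
  mm : ∀ m ∈ C, ∀ M ∈ C, (∀ x ∈ C, m ≤ x) → (∀ x ∈ C, x ≤ M) → G.Adj m M
  cons : ∀ p ∈ C, ∀ q ∈ C, p < q → (∀ x ∈ C, x ≤ p ∨ q ≤ x) → G.Adj p q

def NC (G : SimpleGraph ℕ) : Prop :=
  ∀ x y z w, G.Adj x z → G.Adj y w → x < y → y < z → z < w → False

def Long (G : SimpleGraph ℕ) : Prop := ∀ x y, G.Adj x y → x < y → x + 2 ≤ y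

open Classical in
noncomputable def FF (G : SimpleGraph ℕ) (a b : ℕ) : Finset ℕ :=
  (Finset.Ioo a b).filter (fun x => ∀ y, ¬ G.Adj x y)

lemma card_le_sub {C : Finset ℕ} {a b : ℕ} (h : C ⊆ Finset.Icc a b) : C.card ≤ b + 1 - a := by
  simpa using Finset.card_le_card h

lemma poly_minmax {G : SimpleGraph ℕ} {C : Finset ℕ} (h : CPoly G C) :
    ∃ m ∈ C, ∃ M ∈ C, (∀ x ∈ C, m ≤ x) ∧ (∀ x ∈ C, x ≤ M) ∧ G.Adj m M := by
  have hne : C.Nonempty := by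
    rw [← Finset.card_pos]; have := h.card; omega
  have h1 : ∀ x ∈ C, C.min' hne ≤ x := fun x hx => Finset.min'_le C x hx
  have h2 : ∀ x ∈ C, x ≤ C.max' hne := fun x hx => Finset.le_max' C x hx
  exact ⟨_, C.min'_mem hne, _, C.max'_mem hne, h1, h2,
    h.mm _ (C.min'_mem hne) _ (C.max'_mem hne) h1 h2⟩

open Classical in
lemma main_lin {ι : Type*} (G : SimpleGraph ℕ) (hnc : NC G) (hl : Long G) (C : ι → Finset ℕ) :
    ∀ d a b : ℕ, b - a = d → a + 2 ≤ b →
      (∀ x y, a < x → x < b → G.Adj x y → a ≤ y ∧ y ≤ b) →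
      ∀ J : Finset ι, (∀ j ∈ J, CPoly G (C j)) → (∀ j ∈ J, C j ⊆ Finset.Icc a b) →
        (∀ j ∈ J, ∀ j' ∈ J, j ≠ j' → Disjoint (C j) (C j')) →
        1 + ∑ j ∈ J, ((C j).card - 2) ≤ (FF G a b).card := by
  intro d
  induction d using Nat.strong_induction_on with
  | _ d ih =>
  intro a b hd hab hcl J hP hC hD
  by_cases hcase : ∃ j ∈ J, a ∈ C j ∧ b ∈ C j
  · obtain ⟨j0, hj0, ha0, hb0⟩ := hcase
    have hP0 := hP j0 hj0
    have hC0 := hC j0 hj0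
    -- successor
    have hs : ∀ p ∈ (C j0).erase b, ∃ q ∈ C j0, p < q ∧ ∀ x ∈ C j0, x ≤ p ∨ q ≤ x := by
      intro p hp
      have hpb := (Finset.mem_Icc.1 (hC0 (Finset.mem_of_mem_erase hp))).2
      have hpb' := Finset.ne_of_mem_erase hp
      have hne : ((C j0).filter (fun x => p < x)).Nonempty :=
        ⟨b, Finset.mem_filter.2 ⟨hb0, by omega⟩⟩
      have hm := Finset.min'_mem _ hne
      rw [Finset.mem_filter] at hm
      refine ⟨_, hm.1, hm.2, ?_⟩
      intro x hx
      by_cases hxp : x ≤ p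
      · exact Or.inl hxp
      · exact Or.inr (Finset.min'_le _ _ (Finset.mem_filter.2 ⟨hx, by omega⟩))
    choose! s hs1 hs2 hs3 using hs
    have key : ∀ p ∈ (C j0).erase b,
        1 + ∑ j ∈ (J.erase j0).filter (fun j => C j ⊆ Finset.Icc p (s p)), ((C j).card - 2)
          ≤ (FF G p (s p)).card := by
      intro p hp
      have hpC := Finset.mem_of_mem_erase hp
      have h1 := hs1 p hp
      have h2 := hs2 p hp
      have h3 := hs3 p hp
      have hadj := hP0.cons p hpC _ h1 h2 h3
      have hp' := Finset.mem_Icc.1 (hC0 hpC)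
      have hq' := Finset.mem_Icc.1 (hC0 h1)
      have hlt : s p - p < d := by
        by_contra hcon
        have e1 : p = a := by omega
        have e2 : s p = b := by omega
        have : C j0 ⊆ {a, b} := by
          intro x hx
          have := h3 x hx
          have hx' := Finset.mem_Icc.1 (hC0 hx)
          simp only [Finset.mem_insert, Finset.mem_singleton]
          omega
        have := Finset.card_le_card this
        have := Finset.card_le_two (a := a) (b := b)
        have := hP0.card
        omega
      refine ih _ hlt p (s p) rfl (hl _ _ hadj h2) ?_ _ ?_ ?_ ?_
      · intro x y hx1 hx2 hxy
        constructor
        · by_contra hy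
          exact hnc y p x (s p) hxy.symm hadj (by omega) hx1 hx2
        · by_contra hy
          exact hnc p x (s p) y hadj hxy hx1 hx2 (by omega)
      · intro j hj
        exact hP j (Finset.mem_of_mem_erase (Finset.mem_filter.1 hj).1)
      · intro j hj
        exact (Finset.mem_filter.1 hj).2
      · intro j hj j' hj'
        exact hD j (Finset.mem_of_mem_erase (Finset.mem_filter.1 hj).1) j'
          (Finset.mem_of_mem_erase (Finset.mem_filter.1 hj').1)
    have hsum := Finset.sum_le_sum key
    have hF : ∑ p ∈ (C j0).erase b, (FF G p (s p)).card ≤ (FF G a b).card := by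
      rw [← Finset.card_biUnion]
      · apply Finset.card_le_card
        intro x hx
        simp only [Finset.mem_biUnion, FF, Finset.mem_filter, Finset.mem_Ioo] at hx ⊢
        obtain ⟨p, hp, hx1, hx2⟩ := hx
        have hp' := Finset.mem_Icc.1 (hC0 (Finset.mem_of_mem_erase hp))
        have hq' := Finset.mem_Icc.1 (hC0 (hs1 p hp))
        exact ⟨by omega, hx2⟩
      · intro p hp p' hp' hne
        rw [Finset.mem_coe] at hp hp'
        change Disjoint (FF G p (s p)) (FF G p' (s p'))
        rw [Finset.disjoint_left]
        intro x hx hx'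
        simp only [FF, Finset.mem_filter, Finset.mem_Ioo] at hx hx'
        have h1 := hs3 p hp p' (Finset.mem_of_mem_erase hp')
        have h2 := hs3 p' hp' p (Finset.mem_of_mem_erase hp)
        omega
    have hJ : ∑ j ∈ J.erase j0, ((C j).card - 2) ≤
        ∑ p ∈ (C j0).erase b, ∑ j ∈ (J.erase j0).filter (fun j => C j ⊆ Finset.Icc p (s p)),
          ((C j).card - 2) := by
      simp_rw [Finset.sum_filter]
      rw [Finset.sum_comm]
      apply Finset.sum_le_sum
      intro j hj
      have hjJ := Finset.mem_of_mem_erase hj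
      have hdis := hD j hjJ j0 hj0 (Finset.ne_of_mem_erase hj)
      rw [Finset.disjoint_left] at hdis
      obtain ⟨m, hm, M, hM, hm', hM', hadj⟩ := poly_minmax (hP j hjJ)
      have hmI := Finset.mem_Icc.1 (hC j hjJ hm)
      have hMI := Finset.mem_Icc.1 (hC j hjJ hM)
      have hma : m ≠ a := fun h => hdis hm (h ▸ ha0)
      have hne : ((C j0).filter (fun x => x < m)).Nonempty :=
        ⟨a, Finset.mem_filter.2 ⟨ha0, by omega⟩⟩
      obtain ⟨p, hp, hpm⟩ : ∃ p ∈ (C j0).filter (fun x => x < m),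
          ∀ x ∈ (C j0).filter (fun x => x < m), x ≤ p :=
        ⟨_, Finset.max'_mem _ hne, fun x hx => Finset.le_max' _ x hx⟩
      rw [Finset.mem_filter] at hp
      have hpb : p ∈ (C j0).erase b := Finset.mem_erase.2 ⟨by omega, hp.1⟩
      have h1 := hs1 p hpb
      have h2 := hs2 p hpb
      have h3 := hs3 p hpb
      have hms : m < s p := by
        have : m ≠ s p := fun h => hdis hm (h ▸ h1)
        by_contra hcon
        have := hpm (s p) (Finset.mem_filter.2 ⟨h1, by omega⟩)
        omega
      have hMs : M ≤ s p := by
        by_contra hcon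
        exact hnc p m (s p) M (hP0.cons p hp.1 _ h1 h2 h3) hadj hp.2 hms (by omega)
      have hsub : C j ⊆ Finset.Icc p (s p) := by
        intro x hx
        have := hm' x hx
        have := hM' x hx
        rw [Finset.mem_Icc]; omega
      refine le_trans ?_ (Finset.single_le_sum (fun _ _ => Nat.zero_le _) hpb)
      rw [if_pos hsub]
    rw [Finset.sum_add_distrib] at hsum
    have hc1 : ∑ p ∈ (C j0).erase b, 1 = (C j0).card - 1 := by
      rw [Finset.sum_const, Finset.card_erase_of_mem hb0]; simp
    have := Finset.add_sum_erase J (fun j => (C j).card - 2) hj0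

    have := hP0.card
    omega
  · push Not at hcase
    by_cases hn : ∃ c, a < c ∧ c < b ∧ G.Adj a c
    · have hne : ((Finset.Ioo a b).filter (fun c => G.Adj a c)).Nonempty := by
        obtain ⟨c, h1, h2, h3⟩ := hn
        exact ⟨c, by simp [h1, h2, h3]⟩
      obtain ⟨c, hc, hcm⟩ : ∃ c ∈ (Finset.Ioo a b).filter (fun c => G.Adj a c),
          ∀ x ∈ (Finset.Ioo a b).filter (fun c => G.Adj a c), x ≤ c :=
        ⟨_, Finset.max'_mem _ hne, fun x hx => Finset.le_max' _ x hx⟩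
      simp only [Finset.mem_filter, Finset.mem_Ioo] at hc hcm
      obtain ⟨⟨hac, hcb⟩, hadj⟩ := hc
      have hsplit := Finset.sum_filter_add_sum_filter_not J (fun j => C j ⊆ Finset.Icc a c)
        (fun j => (C j).card - 2)
      have i1 := ih (c - a) (by omega) a c rfl (hl _ _ hadj hac) (by
        intro x y hx1 hx2 hxy
        constructor
        · exact (hcl x y hx1 (by omega) hxy).1
        · by_contra hy
          exact hnc a x c y hadj hxy hx1 hx2 (by omega))
        (J.filter (fun j => C j ⊆ Finset.Icc a c))
        (fun j hj => hP j (Finset.mem_filter.1 hj).1)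
        (fun j hj => (Finset.mem_filter.1 hj).2)
        (fun j hj j' hj' => hD j (Finset.mem_filter.1 hj).1 j' (Finset.mem_filter.1 hj').1)
      have hsub2 : ∀ j ∈ J.filter (fun j => ¬ C j ⊆ Finset.Icc a c), C j ⊆ Finset.Icc c b := by
        intro j hj
        obtain ⟨hjJ, hj2⟩ := Finset.mem_filter.1 hj
        obtain ⟨m, hm, M, hM, hm', hM', hmM⟩ := poly_minmax (hP j hjJ)
        have hmI := Finset.mem_Icc.1 (hC j hjJ hm)
        have hMI := Finset.mem_Icc.1 (hC j hjJ hM)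
        have hcM : c < M := by
          by_contra hcon
          apply hj2
          intro x hx
          have := hm' x hx
          have := hM' x hx
          rw [Finset.mem_Icc]; omega
        have hcm' : c ≤ m := by
          by_contra hcon
          by_cases hma : m = a
          · subst hma
            by_cases hMb : M = b
            · exact hcase j hjJ hm (hMb ▸ hM)
            · have := hcm M ⟨⟨by omega, by omega⟩, hmM⟩
              omega
          · exact hnc a m c M hadj hmM (by omega) (by omega) hcM
        intro x hx
        have := hm' x hx
        have := hM' x hx
        rw [Finset.mem_Icc]; omega
      have i2 : ∑ j ∈ J.filter (fun j => ¬ C j ⊆ Finset.Icc a c), ((C j).card - 2)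
          ≤ (FF G c b).card := by
        by_cases hcb2 : c + 2 ≤ b
        · have := ih (b - c) (by omega) c b rfl hcb2 (by
            intro x y hx1 hx2 hxy
            have hy := hcl x y (by omega) hx2 hxy
            refine ⟨?_, hy.2⟩
            by_contra hcon
            by_cases hya : y = a
            · subst hya
              have := hcm x ⟨⟨by omega, by omega⟩, hxy.symm⟩
              omega
            · exact hnc a y c x hadj hxy.symm (by omega) (by omega) hx1)
            (J.filter (fun j => ¬ C j ⊆ Finset.Icc a c))
            (fun j hj => hP j (Finset.mem_filter.1 hj).1) hsub2
            (fun j hj j' hj' => hD j (Finset.mem_filter.1 hj).1 j' (Finset.mem_filter.1 hj').1)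
          omega
        · rw [Finset.sum_eq_zero]
          · exact Nat.zero_le _
          · intro j hj
            have := card_le_sub (hsub2 j hj)
            omega
      have hF : (FF G a c).card + (FF G c b).card ≤ (FF G a b).card := by
        rw [← Finset.card_union_of_disjoint]
        · apply Finset.card_le_card
          intro x hx
          simp only [Finset.mem_union, FF, Finset.mem_filter, Finset.mem_Ioo] at hx ⊢
          rcases hx with hx | hx
          · exact ⟨by omega, hx.2⟩
          · exact ⟨by omega, hx.2⟩
        · rw [Finset.disjoint_left]
          intro x hx hx'
          simp only [FF, Finset.mem_filter, Finset.mem_Ioo] at hx hx'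
          omega
      omega
    · push Not at hn
      have hsub2 : ∀ j ∈ J, C j ⊆ Finset.Icc (a + 1) b := by
        intro j hjJ
        obtain ⟨m, hm, M, hM, hm', hM', hmM⟩ := poly_minmax (hP j hjJ)
        have hMI := Finset.mem_Icc.1 (hC j hjJ hM)
        intro x hx
        have h1 := Finset.mem_Icc.1 (hC j hjJ hx)
        rw [Finset.mem_Icc]
        refine ⟨?_, h1.2⟩
        by_contra hcon
        have hma : m = a := by
          have := hm' x hx
          have := Finset.mem_Icc.1 (hC j hjJ hm)
          omega
        subst hma
        by_cases hMb : M = b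
        · exact hcase j hjJ hm (hMb ▸ hM)
        · have := hmM.ne
          exact hn M (by omega) (by omega) hmM
      by_cases hab3 : a + 3 ≤ b
      · have := ih (b - (a + 1)) (by omega) (a + 1) b rfl (by omega) (by
          intro x y hx1 hx2 hxy
          have hy := hcl x y (by omega) hx2 hxy
          refine ⟨?_, hy.2⟩
          by_contra hcon
          have : y = a := by omega
          subst this
          exact hn x (by omega) hx2 hxy.symm) J hP hsub2 hD
        refine this.trans (Finset.card_le_card ?_)
        intro x hx
        simp only [FF, Finset.mem_filter, Finset.mem_Ioo] at hx ⊢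
        exact ⟨by omega, hx.2⟩
      · rw [Finset.sum_eq_zero]
        · apply Finset.card_pos.2
          refine ⟨a + 1, ?_⟩
          simp only [FF, Finset.mem_filter, Finset.mem_Ioo]
          refine ⟨by omega, ?_⟩
          intro y hy
          have h1 := hcl (a + 1) y (by omega) (by omega) hy
          have h2 := hy.ne
          rcases Nat.lt_or_gt_of_ne h2 with h | h
          · have := hl _ _ hy h
            omega
          · have := hl _ _ hy.symm h
            omega
        · intro j hj
          have := card_le_sub (hsub2 j hj)
          omega

lemma walk_inside {G : SimpleGraph ℕ} (hnc : NC G) {u w : ℕ} (huw : G.Adj u w) :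
    ∀ {x y : ℕ} (q : G.Walk x y), u ∉ q.support → w ∉ q.support → u < x → x < w →
      ∀ z ∈ q.support, u < z ∧ z < w := by
  intro x y q
  induction q with
  | nil =>
    intro _ _ h1 h2 z hz
    simp at hz; subst hz; exact ⟨h1, h2⟩
  | @cons x x' y h p ih =>
    intro hu hw h1 h2 z hz
    simp only [SimpleGraph.Walk.support_cons, List.mem_cons, not_or] at hu hw hz
    rcases hz with rfl | hz
    · exact ⟨h1, h2⟩
    have hux : u ≠ x' := fun e => hu.2 (e ▸ p.start_mem_support)
    have hwx : w ≠ x' := fun e => hw.2 (e ▸ p.start_mem_support)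
    refine ih hu.2 hw.2 ?_ ?_ z hz
    · by_contra hc
      exact hnc x' u x w h.symm huw (by omega) h1 h2
    · by_contra hc
      exact hnc u x w x' huw h h1 h2 (by omega)

lemma walk_outside {G : SimpleGraph ℕ} (hnc : NC G) {u w : ℕ} (huw : G.Adj u w)
    {x y : ℕ} (q : G.Walk x y) (hu : u ∉ q.support) (hw : w ∉ q.support) :
    (∀ z ∈ q.support, u < z ∧ z < w) ∨ (∀ z ∈ q.support, ¬ (u < z ∧ z < w)) := by
  by_cases h : ∃ z ∈ q.support, u < z ∧ z < w
  · left
    obtain ⟨z, hz, h1, h2⟩ := h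
    have hx : u < x ∧ x < w := by
      have := walk_inside hnc huw (q.takeUntil z hz).reverse
        (fun hh => hu (q.support_takeUntil_subset_support hz (by simpa using hh)))
        (fun hh => hw (q.support_takeUntil_subset_support hz (by simpa using hh))) h1 h2 x
      exact this (by simp)
    exact walk_inside hnc huw q hu hw hx.1 hx.2
  · right
    push Not at h
    intro z hz hh
    have := h z hz hh.1
    omega

/-- The two sides lemma, for a cycle starting with the given edge. -/
lemma cyc_side0 {G : SimpleGraph ℕ} (hnc : NC G) {a b : ℕ} (h : G.Adj a b) (p : G.Walk b a)
    (hp : p.IsPath) {u w : ℕ} (huw : G.Adj u w) (hlt : u < w) (he : (a = u ∧ b = w) ∨ (a = w ∧ b = u)) :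
    (∀ z ∈ p.support, u ≤ z ∧ z ≤ w) ∨ (∀ z ∈ p.support, z ≤ u ∨ w ≤ z) := by
  cases p with
  | nil => exact absurd h (G.irrefl)
  | @cons _ x _ h' q =>
    rw [SimpleGraph.Walk.cons_isPath_iff] at hp
    obtain ⟨hq, hb⟩ := hp
    have hsplit : ∀ z ∈ (SimpleGraph.Walk.cons h' q).support,
        z = u ∨ z = w ∨ (z ∈ q.support ∧ z ≠ a) := by
      intro z hz
      simp only [SimpleGraph.Walk.support_cons, List.mem_cons] at hz
      by_cases hza : z = a
      · omega
      · rcases hz with hz | hz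
        · omega
        · exact Or.inr (Or.inr ⟨hz, hza⟩)
    by_cases hnil : q.Nil
    · left
      intro z hz
      rcases hsplit z hz with h1 | h1 | ⟨h1, h2⟩
      · omega
      · omega
      · cases q with
        | nil => simp at h1; omega
        | cons _ _ => simp at hnil
    · have hds : q.support = q.dropLast.support ++ [a] := by
        simp [SimpleGraph.Walk.support_dropLast hnil]
      have hnd := hq.support_nodup
      rw [hds] at hnd
      have ha : a ∉ q.dropLast.support := by
        intro hh
        exact List.disjoint_of_nodup_append hnd hh (by simp)
      have hb' : b ∉ q.dropLast.support := by
        intro hh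
        apply hb
        rw [hds]; simp [hh]
      have hsplit' : ∀ z ∈ (SimpleGraph.Walk.cons h' q).support,
          z = u ∨ z = w ∨ z ∈ q.dropLast.support := by
        intro z hz
        rcases hsplit z hz with h1 | h1 | ⟨h1, h2⟩
        · exact Or.inl h1
        · exact Or.inr (Or.inl h1)
        · rw [hds] at h1
          simp only [List.mem_append, List.mem_singleton] at h1
          tauto
      have hu : u ∉ q.dropLast.support := by
        rcases he with ⟨rfl, rfl⟩ | ⟨rfl, rfl⟩ <;> assumption
      have hw : w ∉ q.dropLast.support := by
        rcases he with ⟨rfl, rfl⟩ | ⟨rfl, rfl⟩ <;> assumption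
      rcases walk_outside hnc huw q.dropLast hu hw with H | H
      · left
        intro z hz
        rcases hsplit' z hz with h1 | h1 | h1
        · omega
        · omega
        · have := H z h1; omega
      · right
        intro z hz
        rcases hsplit' z hz with h1 | h1 | h1
        · omega
        · omega
        · have := H z h1; omega

lemma cyc_side {G : SimpleGraph ℕ} (hnc : NC G) {v : ℕ} (c : G.Walk v v) (hc : c.IsCycle)
    {u w : ℕ} (he : c.toSubgraph.Adj u w) (hlt : u < w) :
    (∀ z ∈ c.support, u ≤ z ∧ z ≤ w) ∨ (∀ z ∈ c.support, z ≤ u ∨ w ≤ z) := by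
  have huw : G.Adj u w := he.adj_sub
  -- find a rotated version
  have hu : u ∈ c.support := c.mem_verts_toSubgraph.1 he.fst_mem
  have hc' := hc.rotate hu
  have hmem : ∀ z, z ∈ c.support → z ∈ (c.rotate u hu).support := by
    intro z hz; simpa [SimpleGraph.Walk.mem_support_rotate_iff] using hz
  have he' : s(u, w) ∈ (c.rotate u hu).edges := by
    rw [(c.rotate_edges u hu).mem_iff]
    exact SimpleGraph.Walk.adj_toSubgraph_iff_mem_edges.1 he
  generalize c.rotate u hu = r at hc' hmem he'
  -- the path from the second vertex
  have aux : ∀ (r : G.Walk u u), r.IsCycle → r.snd = w →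
      (∀ z ∈ r.support, u ≤ z ∧ z ≤ w) ∨ (∀ z ∈ r.support, z ≤ u ∨ w ≤ z) := by
    intro r hr hs
    cases r with
    | nil => simp at hr
    | cons h p =>
      simp at hs
      subst hs
      rw [SimpleGraph.Walk.cons_isCycle_iff] at hr
      have := cyc_side0 hnc h p hr.1 h hlt (Or.inl ⟨rfl, rfl⟩)
      rcases this with H | H
      · left
        intro z hz
        simp only [SimpleGraph.Walk.support_cons, List.mem_cons] at hz
        rcases hz with rfl | hz
        · omega
        · exact H z hz
      · right
        intro z hz
        simp only [SimpleGraph.Walk.support_cons, List.mem_cons] at hz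
        rcases hz with rfl | hz
        · omega
        · exact H z hz
  have hor : r.snd = w ∨ r.penultimate = w := by
    have h1 := hc'.neighborSet_toSubgraph_endpoint
    have : w ∈ r.toSubgraph.neighborSet u := SimpleGraph.Walk.adj_toSubgraph_iff_mem_edges.2 he'
    rw [h1] at this
    simp at this
    tauto
  have : (∀ z ∈ r.support, u ≤ z ∧ z ≤ w) ∨ (∀ z ∈ r.support, z ≤ u ∨ w ≤ z) := by
    rcases hor with h | h
    · exact aux r hc' h
    · have := aux r.reverse hc'.reverse (by simpa using h)
      simpa using this
  rcases this with H | H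
  · exact Or.inl fun z hz => H z (hmem z hz)
  · exact Or.inr fun z hz => H z (hmem z hz)

lemma cyc_card {V : Type*} [DecidableEq V] {G : SimpleGraph V} {v : V} (c : G.Walk v v) (hc : c.IsCycle) :
    c.support.toFinset.card = c.length := by
  have h1 : c.support.toFinset = c.support.tail.toFinset := by
    ext x
    simp only [List.mem_toFinset]
    constructor
    · intro hx
      rw [← SimpleGraph.Walk.cons_tail_support] at hx
      rcases List.mem_cons.1 hx with rfl | hx
      · exact SimpleGraph.Walk.end_mem_tail_support hc.not_nil
      · exact hx
    · exact List.mem_of_mem_tail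
  rw [h1, List.toFinset_card_of_nodup hc.support_nodup]
  simp

lemma cyc_poly {G : SimpleGraph ℕ} (hnc : NC G) {v : ℕ} (c : G.Walk v v) (hc : c.IsCycle) :
    CPoly G c.support.toFinset := by
  have nb : ∀ p ∈ c.support, ∃ x y, x < y ∧ c.toSubgraph.Adj p x ∧ c.toSubgraph.Adj p y := by
    intro p hp
    have := hc.ncard_neighborSet_toSubgraph_eq_two hp
    obtain ⟨x, y, hxy, hs⟩ := Set.ncard_eq_two.1 this
    have hx : c.toSubgraph.Adj p x := by
      have : x ∈ c.toSubgraph.neighborSet p := by rw [hs]; simp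
      exact this
    have hy : c.toSubgraph.Adj p y := by
      have : y ∈ c.toSubgraph.neighborSet p := by rw [hs]; simp
      exact this
    rcases Nat.lt_or_gt_of_ne hxy with h | h
    · exact ⟨x, y, h, hx, hy⟩
    · exact ⟨y, x, h, hy, hx⟩
  have ms : ∀ {p x}, c.toSubgraph.Adj p x → x ∈ c.support := fun h =>
    c.mem_verts_toSubgraph.1 h.snd_mem
  constructor
  · rw [cyc_card c hc]; exact hc.three_le_length
  · intro m hm M hM h1 h2
    simp only [List.mem_toFinset] at hm hM h1 h2
    obtain ⟨x, y, hxy, hx, hy⟩ := nb m hm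
    have e1 := h1 x (ms hx)
    have e2 := hx.adj_sub.ne
    have e3 := h2 y (ms hy)
    have : y = M := by
      rcases cyc_side hnc c hc hy (by omega) with H | H
      · have := H M hM; omega
      · have := H x (ms hx); omega
    exact this ▸ hy.adj_sub
  · intro p hp q hq hpq hno
    simp only [List.mem_toFinset] at hp hq hno
    obtain ⟨x, y, hxy, hx, hy⟩ := nb p hp
    have e1 := hx.adj_sub.ne
    have e2 := hy.adj_sub.ne
    have n1 := hno x (ms hx)
    have n2 := hno y (ms hy)
    by_cases hpx : p < x
    · rcases cyc_side hnc c hc hx hpx with H | H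
      · have := H y (ms hy); omega
      · have := H q hq
        have : x = q := by omega
        exact this ▸ hx.adj_sub
    · by_cases hpy : p < y
      · rcases cyc_side hnc c hc hy hpy with H | H
        · have := H x (ms hx); omega
        · have := H q hq
          have : y = q := by omega
          exact this ▸ hy.adj_sub
      · rcases cyc_side hnc c hc hx.symm (by omega) with H | H
        · have := H q hq; omega
        · have := H y (ms hy); omega

def fr (n : ℕ) [NeZero n] (a : ZMod n) : ZMod n ↪ ℕ :=
  ⟨fun v => (v - a).val, fun x y h => by
    have := ZMod.val_injective n h
    simpa using this⟩

lemma fr_sub (n : ℕ) [NeZero n] (a x y : ZMod n) :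
    (fr n a x ≤ fr n a y ∧ (y - x).val + fr n a x = fr n a y) ∨
    (fr n a y < fr n a x ∧ (y - x).val + fr n a x = fr n a y + n) := by
  have e : y - a = (y - x) + (x - a) := by ring
  have hx := ZMod.val_lt (x - a)
  have hy := ZMod.val_lt (y - a)
  have hxy := ZMod.val_lt (y - x)
  change ((x - a).val ≤ (y - a).val ∧ (y - x).val + (x - a).val = (y - a).val) ∨
    ((y - a).val < (x - a).val ∧ (y - x).val + (x - a).val = (y - a).val + n)
  by_cases h : (y - x).val + (x - a).val < n
  · have := ZMod.val_add_of_lt h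
    rw [← e] at this
    left; omega
  · have := ZMod.val_add_val_of_le (not_lt.1 h)
    rw [← e] at this
    right; omega

lemma fr_lt (n : ℕ) [NeZero n] (a x : ZMod n) : fr n a x < n := ZMod.val_lt _

lemma fr_self (n : ℕ) [NeZero n] (a : ZMod n) : fr n a a = 0 := by
  change (a - a).val = 0
  simp

def fG (n : ℕ) [NeZero n] (S : Set (Sym2 (ZMod n))) (a : ZMod n) : SimpleGraph ℕ :=
  (chordGraph n S).map (fr n a)

lemma fG_adj {n : ℕ} [NeZero n] {S : Set (Sym2 (ZMod n))} {a : ZMod n} {x y : ℕ} :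
    (fG n S a).Adj x y ↔ ∃ X Y, (chordGraph n S).Adj X Y ∧ fr n a X = x ∧ fr n a Y = y :=
  SimpleGraph.map_adj _ _ _ _

lemma fG_nc {n : ℕ} [NeZero n] {S : Set (Sym2 (ZMod n))} (hS : NonCrossingChords n S)
    (a : ZMod n) : NC (fG n S a) := by
  intro x y z w hxz hyw h1 h2 h3
  obtain ⟨X, Z, hXZ, rfl, rfl⟩ := fG_adj.1 hxz
  obtain ⟨Y, W, hYW, rfl, rfl⟩ := fG_adj.1 hyw
  have m1 : s(X, Z) ∈ S := ((SimpleGraph.fromEdgeSet_adj S).1 hXZ).1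
  have m2 : s(Y, W) ∈ S := ((SimpleGraph.fromEdgeSet_adj S).1 hYW).1
  have hw := fr_lt n a W
  have a1 := fr_sub n a X Y
  have a2 := fr_sub n a X Z
  have a3 := fr_sub n a X W
  have a4 := fr_sub n a Z X
  have a5 := fr_sub n a Z Y
  have a6 := fr_sub n a Z W
  have b1 : Between n X Z Y := ⟨by omega, by omega⟩
  have b2 : ¬ Between n X Z W := fun h => by have := h.2; omega
  have b3 : ¬ Between n Z X Y := fun h => by have := h.2; omega
  have b4 : Between n Z X W := ⟨by omega, by omega⟩
  apply hS.2 _ m1 _ m2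
  · intro h
    rw [Sym2.eq_iff] at h
    rcases h with ⟨rfl, rfl⟩ | ⟨rfl, rfl⟩ <;> omega
  · intro A B C D h h'
    rw [Sym2.eq_iff] at h h'
    rcases h with ⟨rfl, rfl⟩ | ⟨rfl, rfl⟩ <;> rcases h' with ⟨rfl, rfl⟩ | ⟨rfl, rfl⟩ <;>
      simp [Xor', b1, b2, b3, b4]

lemma fG_long {n : ℕ} [NeZero n] (hn : 3 ≤ n) {S : Set (Sym2 (ZMod n))} (hS : NonCrossingChords n S)
    (a : ZMod n) : Long (fG n S a) := by
  intro x y hxy hlt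
  obtain ⟨X, Y, hXY, rfl, rfl⟩ := fG_adj.1 hxy
  have m1 : s(X, Y) ∈ S := ((SimpleGraph.fromEdgeSet_adj S).1 hXY).1
  by_contra hc
  apply (hS.1 _ m1).2
  refine ⟨X, ?_⟩
  have h1 := fr_sub n a X Y
  have h2 : (Y - X).val = 1 := by omega
  have h3 : Y - X = 1 := by
    have := ZMod.natCast_zmod_val (Y - X)
    rw [h2] at this
    simpa using this.symm
  rw [← h3]; simp

lemma fr_poly {n : ℕ} [NeZero n] {S : Set (Sym2 (ZMod n))} (hS : NonCrossingChords n S)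
    (a : ZMod n) {v : ZMod n} (c : (chordGraph n S).Walk v v) (hc : c.IsCycle) :
    CPoly (fG n S a) (c.support.toFinset.map (fr n a)) := by
  let f : chordGraph n S →g fG n S a := (SimpleGraph.Embedding.map (fr n a) _).toHom
  have hf : ∀ x, f x = fr n a x := fun x => rfl
  have hinj : Function.Injective f := (fr n a).injective
  have h := cyc_poly (fG_nc hS a) (c.map f) (hc.map hinj)
  have e : (c.map f).support.toFinset = c.support.toFinset.map (fr n a) := by
    ext x
    simp [SimpleGraph.Walk.support_map, hf]
  rwa [e] at h

lemma arc {n : ℕ} [NeZero n] (hn : 3 ≤ n) {S : Set (Sym2 (ZMod n))} (hS : NonCrossingChords n S)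
    {k : ℕ} (v : Fin k → ZMod n) (c : ∀ j, (chordGraph n S).Walk (v j) (v j))
    (hcyc : ∀ j, (c j).IsCycle)
    (hdisj : ∀ j j', j ≠ j' → ∀ x, x ∈ (c j).support → x ∉ (c j').support)
    {A B : ZMod n} (hAB : (chordGraph n S).Adj A B) (J : Finset (Fin k))
    (hJ : ∀ j ∈ J, ∀ x ∈ (c j).support, fr n A x ≤ fr n A B) :
    1 + ∑ j ∈ J, ((c j).length - 2) ≤ {u | ChordFree n S u ∧ Between n A B u}.ncard := by
  have hadj : (fG n S A).Adj 0 (fr n A B) := fG_adj.2 ⟨A, B, hAB, fr_self n A, rfl⟩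
  have h0 : 0 < fr n A B := by
    have := hadj.ne; omega
  have hl := fG_long hn hS A
  have hnc := fG_nc hS A
  have h := main_lin (fG n S A) hnc hl
    (fun j => (c j).support.toFinset.map (fr n A)) _ 0 (fr n A B) rfl (hl _ _ hadj h0)
    (by
      intro x y hx1 hx2 hxy
      refine ⟨Nat.zero_le _, ?_⟩
      by_contra hy
      exact hnc 0 x _ y hadj hxy hx1 hx2 (by omega))
    J (fun j _ => fr_poly hS A (c j) (hcyc j))
    (by
      intro j hj x hx
      simp only [Finset.mem_map, List.mem_toFinset] at hx
      obtain ⟨X, hX, rfl⟩ := hx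
      simpa using hJ j hj X hX)
    (by
      intro j _ j' _ hne
      rw [Finset.disjoint_map, Finset.disjoint_left]
      intro x hx hx'
      simp only [List.mem_toFinset] at hx hx'
      exact hdisj j j' hne x hx hx')
  simp only [Finset.card_map, cyc_card _ (hcyc _)] at h
  refine h.trans ?_
  have hsub : ((FF (fG n S A) 0 (fr n A B) : Finset ℕ) : Set ℕ) ⊆
      (fr n A) '' {u | ChordFree n S u ∧ Between n A B u} := by
    intro x hx
    simp only [FF, Finset.coe_filter, Finset.mem_Ioo, Set.mem_setOf_eq] at hx
    obtain ⟨⟨hx1, hx2⟩, hx3⟩ := hx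
    have hxn : x < n := hx2.trans (fr_lt n A B)
    have hX : fr n A ((x : ZMod n) + A) = x := by
      change ((x : ZMod n) + A - A).val = x
      rw [add_sub_cancel_right, ZMod.val_natCast_of_lt hxn]
    refine ⟨(x : ZMod n) + A, ⟨?_, ?_⟩, hX⟩
    · intro e he hmem
      obtain ⟨Y, rfl⟩ := Sym2.mem_iff_exists.1 hmem
      apply hx3 (fr n A Y)
      refine fG_adj.2 ⟨_, Y, ?_, hX, rfl⟩
      refine (SimpleGraph.fromEdgeSet_adj S).2 ⟨he, ?_⟩
      intro hE
      exact (hS.1 _ he).1 (by rw [← hE]; simp)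
    · change 0 < fr n A _ ∧ fr n A _ < fr n A B
      rw [hX]; exact ⟨hx1, hx2⟩
  have := Set.ncard_le_ncard hsub (Set.toFinite _)
  rwa [Set.ncard_coe_finset, Set.ncard_image_of_injective _ (fr n A).injective] at this

/-- Block-free rendition of the paper's Lemma 2: if the chord graph of a
nonempty set of pairwise non-crossing chords contains `k ≥ 1` pairwise
vertex-disjoint cycles of lengths `i₁, …, i_k` (each at least `3`), then the
number of chord-free vertices is at least `2 + ∑ⱼ (iⱼ - 2)`. -/
theorem chord_free_of_disjoint_cycles (n : ℕ) (hn : 3 ≤ n)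
    (S : Set (Sym2 (ZMod n))) (hS : NonCrossingChords n S) (hne : S.Nonempty)
    (k : ℕ) (hk : 1 ≤ k) (i : Fin k → ℕ) (hi : ∀ j, 3 ≤ i j)
    (v : Fin k → ZMod n) (c : ∀ j, (chordGraph n S).Walk (v j) (v j))
    (hcyc : ∀ j, (c j).IsCycle) (hlen : ∀ j, (c j).length = i j)
    (hdisj : ∀ j j', j ≠ j' → ∀ x, x ∈ (c j).support → x ∉ (c j').support) :
    2 + ∑ j, (i j - 2) ≤ {u : ZMod n | ChordFree n S u}.ncard := by
  classical
  haveI : NeZero n := ⟨by omega⟩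
  let j0 : Fin k := ⟨0, hk⟩
  set A : ZMod n := v j0 with hA
  have hP0 := fr_poly hS A (c j0) (hcyc j0)
  obtain ⟨m, hm, M, hM, hm', hM', hmM⟩ := poly_minmax hP0
  have hA0 : (0 : ℕ) ∈ (c j0).support.toFinset.map (fr n A) :=
    Finset.mem_map.2 ⟨A, by simp [hA], fr_self n A⟩
  have hm0 : m = 0 := Nat.le_zero.1 (hm' 0 hA0)
  subst hm0
  obtain ⟨A', B, hAB, hA', hB⟩ := fG_adj.1 hmM
  have : A' = A := (fr n A).injective (by rw [hA', fr_self])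
  subst this
  clear hA'
  subst hB
  have hMpos : 0 < fr n A B := by
    have := hmM.ne; omega
  let J1 : Finset (Fin k) := Finset.univ.filter
    (fun j => ∀ x ∈ (c j).support, fr n A x ≤ fr n A B)
  let J2 : Finset (Fin k) := Finset.univ.filter
    (fun j => ∀ x ∈ (c j).support, fr n B x ≤ fr n B A)
  have h1 := arc hn hS v c hcyc hdisj hAB J1 (fun j hj => (Finset.mem_filter.1 hj).2)
  have h2 := arc hn hS v c hcyc hdisj hAB.symm J2 (fun j hj => (Finset.mem_filter.1 hj).2)
  have hfB : ∀ x, fr n B x = (x - B).val := fun x => rfl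
  have hAA := fr_self n A
  have hcover : (Finset.univ : Finset (Fin k)) ⊆ J1 ∪ J2 := by
    intro j _
    by_cases hj : j ∈ J1
    · exact Finset.mem_union_left _ hj
    apply Finset.mem_union_right
    simp only [J1, Finset.mem_filter, Finset.mem_univ, true_and] at hj
    push Not at hj
    obtain ⟨x, hx, hxB⟩ := hj
    have hjj : j ≠ j0 := by
      rintro rfl
      have := hM' (fr n A x) (Finset.mem_map.2 ⟨x, by simpa using hx, rfl⟩)
      omega
    obtain ⟨m, hm, M, hM2, hm2, hM2', hmM2⟩ := poly_minmax (fr_poly hS A (c j) (hcyc j))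
    have hxM := hM2' (fr n A x) (Finset.mem_map.2 ⟨x, by simpa using hx, rfl⟩)
    have hmpos : m ≠ 0 := by
      rintro rfl
      obtain ⟨y, hy, hy0⟩ := Finset.mem_map.1 hm
      have : y = A := (fr n A).injective (by rw [hy0, fr_self])
      subst this
      exact hdisj j j0 hjj _ (by simpa using hy) (c j0).start_mem_support
    have hmB : fr n A B ≤ m := by
      by_contra hcon
      exact fG_nc hS A 0 m (fr n A B) M hmM hmM2 (by omega) (by omega) (by omega)
    simp only [J2, Finset.mem_filter, Finset.mem_univ, true_and]
    intro y hy
    have hy' := hm2 (fr n A y) (Finset.mem_map.2 ⟨y, by simpa using hy, rfl⟩)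
    have q1 := fr_sub n A B y
    have q2 := fr_sub n A B A
    have q3 := fr_lt n A y
    rw [hfB, hfB]
    omega
  have hsum : ∑ j, (i j - 2) ≤ ∑ j ∈ J1, ((c j).length - 2) + ∑ j ∈ J2, ((c j).length - 2) := by
    simp_rw [hlen]
    rw [← Finset.sum_union_inter]
    exact (Finset.sum_le_sum_of_subset hcover).trans (Nat.le_add_right _ _)
  have hdis : Disjoint {u | ChordFree n S u ∧ Between n A B u}
      {u | ChordFree n S u ∧ Between n B A u} := by
    rw [Set.disjoint_left]
    rintro u ⟨_, hu1, hu2⟩ ⟨_, hu3, hu4⟩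
    have q1 := fr_sub n A B u
    have q2 := fr_sub n A B A
    have q3 : fr n A u = (u - A).val := rfl
    have q4 : fr n A B = (B - A).val := rfl
    omega
  have hun := Set.ncard_union_eq hdis (Set.toFinite _) (Set.toFinite _)
  have hle : ({u | ChordFree n S u ∧ Between n A B u} ∪
      {u | ChordFree n S u ∧ Between n B A u}).ncard ≤ {u : ZMod n | ChordFree n S u}.ncard := by
    apply Set.ncard_le_ncard _ (Set.toFinite _)
    rintro u (hu | hu)
    · exact hu.1
    · exact hu.1
  omega
end

section
/- Let n ≥ 3 and let S be a set of pairwise non-crossing chords of the standard n-cycle such that exactly two vertices of ZMod n are chord-free for S. Then the chord graph of S is acyclic, and every connected component of the chord graph is a caterpillar. (This is the paper's Lemma 4: if a radius-1 3-polytope has exactly two vertices of degree three, then the chord graph G = F − v − E(H) is a forest all of whose components are caterpillars.) -/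
theorem fc_path {V : Type*} [Finite V] (G : SimpleGraph V) (hc : G.Connected)
    (A : V → Prop) (pos : V → ℤ)
    (hadj : ∀ x y, G.Adj x y → (A x ↔ ¬ A y))
    (hinj : ∀ x y, (A x ↔ A y) → pos x = pos y → x = y)
    (hmono : ∀ x y x' y', G.Adj x y → G.Adj x' y' → (A x ↔ A x') → pos x < pos x' →
      pos y ≤ pos y') :
    ∃ (u w : V) (p : G.Walk u w), p.IsPath ∧
      ∀ v : V, (∃ a b : V, a ≠ b ∧ G.Adj v a ∧ G.Adj v b) → v ∈ p.support := by
  classical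
  by_cases hA : ∃ v, A v
  · obtain ⟨u, hu, humin⟩ := Set.exists_min_image {v | A v} pos (Set.toFinite _) hA
    obtain ⟨w, hw, hwmax⟩ := Set.exists_max_image {v | A v} pos (Set.toFinite _) hA
    simp only [Set.mem_setOf_eq] at hu humin hw hwmax
    obtain ⟨q⟩ := hc.preconnected u w
    refine ⟨u, w, q.toPath, q.toPath.2, ?_⟩
    generalize (q.toPath : G.Walk u w) = p
    rintro v ⟨a, b, hab, hva, hvb⟩
    wlog hlt : pos a < pos b generalizing a b
    · refine this b a hab.symm hvb hva ?_
      have h1 := hadj _ _ hva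
      have h2 := hadj _ _ hvb
      have : pos a ≠ pos b := fun h => hab (hinj a b (by tauto) h)
      omega
    by_contra hv
    -- invariant set
    let L : V → Prop := fun z => ((A z ↔ A v) ∧ pos z < pos v) ∨ ((A z ↔ ¬ A v) ∧ pos z ≤ pos a)
    have step : ∀ y z, G.Adj y z → y ≠ v → z ≠ v → L y → L z := by
      intro y z hyz hy hz hL
      have h1 := hadj _ _ hyz
      rcases hL with ⟨h, hp⟩ | ⟨h, hp⟩
      · right
        exact ⟨by tauto, hmono y z v a hyz hva h hp⟩
      · left
        have hzv : (A z ↔ A v) := by tauto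
        refine ⟨hzv, ?_⟩
        by_contra hcon
        have hne : pos z ≠ pos v := fun h => hz (hinj z v hzv h)
        have := hmono v b z y hvb hyz.symm hzv.symm (by omega)
        omega
    have key : ∀ (s t : V) (r : G.Walk s t), v ∉ r.support → L s → L t := by
      intro s t r
      induction r with
      | nil => intro _ h; exact h
      | cons h r ih =>
        intro hns hL
        simp only [SimpleGraph.Walk.support_cons, List.mem_cons, not_or] at hns
        refine ih hns.2 (step _ _ h (Ne.symm hns.1) ?_ hL)
        rintro rfl
        exact hns.2 r.start_mem_support
    have huv : u ≠ v := fun h => hv (h ▸ p.start_mem_support)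
    have hwv : w ≠ v := fun h => hv (h ▸ p.end_mem_support)
    have h1 := hadj _ _ hva
    have h2 := hadj _ _ hvb
    have hLu : L u := by
      by_cases hAv : A v
      · left
        have := humin v hAv
        have hne : pos u ≠ pos v := fun h => huv (hinj u v (by tauto) h)
        exact ⟨by tauto, by omega⟩
      · right
        exact ⟨by tauto, humin a (by tauto)⟩
    rcases key u w p hv hLu with ⟨h, hp⟩ | ⟨h, hp⟩
    · have := hwmax v (by tauto)
      omega
    · have := hwmax b (by tauto)
      omega
  · obtain ⟨u⟩ := hc.nonempty
    refine ⟨u, u, .nil, by simp, ?_⟩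
    rintro v ⟨a, b, hab, hva, hvb⟩
    exact absurd (hadj _ _ hva) (by push Not at hA; simp [hA])

theorem fc_acyclic {V : Type*} [Finite V] (G : SimpleGraph V)
    (A : V → Prop) (pos : V → ℤ)
    (hadj : ∀ x y, G.Adj x y → (A x ↔ ¬ A y))
    (hinj : ∀ x y, (A x ↔ A y) → pos x = pos y → x = y)
    (hmono : ∀ x y x' y', G.Adj x y → G.Adj x' y' → (A x ↔ A x') → pos x < pos x' →
      pos y ≤ pos y') : G.IsAcyclic := by
  classical
  intro s c hc
  have nb : ∀ v ∈ c.support, ∃ a b, a ≠ b ∧ c.toSubgraph.Adj v a ∧ c.toSubgraph.Adj v b := by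
    intro v hv
    have := hc.ncard_neighborSet_toSubgraph_eq_two hv
    obtain ⟨a, b, hab, h⟩ := Set.ncard_eq_two.1 this
    have ha : a ∈ c.toSubgraph.neighborSet v := by rw [h]; simp
    have hb : b ∈ c.toSubgraph.neighborSet v := by rw [h]; simp
    exact ⟨a, b, hab, ha, hb⟩
  have mem : ∀ v a, c.toSubgraph.Adj v a → a ∈ c.support := by
    intro v a h
    have := h.snd_mem
    simpa using this
  have hne : {v | v ∈ c.support ∧ A v}.Nonempty := by
    obtain ⟨a, b, hab, ha, hb⟩ := nb s c.start_mem_support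
    by_cases hs : A s
    · exact ⟨s, c.start_mem_support, hs⟩
    · refine ⟨a, mem _ _ ha, ?_⟩
      have := hadj _ _ ha.adj_sub
      tauto
  obtain ⟨v, ⟨hv, hAv⟩, hmax⟩ := Set.exists_max_image _ pos (Set.toFinite _) hne
  obtain ⟨a, b, hab, hva, hvb⟩ := nb v hv
  wlog hlt : pos a < pos b generalizing a b
  · refine this b a hab.symm hvb hva ?_
    have h1 := hadj _ _ hva.adj_sub
    have h2 := hadj _ _ hvb.adj_sub
    have : pos a ≠ pos b := fun h => hab (hinj a b (by tauto) h)
    omega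
  obtain ⟨w, hwv, hbw⟩ : ∃ w, w ≠ v ∧ c.toSubgraph.Adj b w := by
    obtain ⟨x, y, hxy, hx, hy⟩ := nb b (mem _ _ hvb)
    by_cases h : x = v
    · exact ⟨y, fun h' => hxy (h.trans h'.symm), hy⟩
    · exact ⟨x, h, hx⟩
  have h1 := hadj _ _ hvb.adj_sub
  have h2 := hadj _ _ hbw.adj_sub
  have hAw : A w := by tauto
  have h3 := hmax w ⟨mem _ _ hbw, hAw⟩
  have hne : pos w ≠ pos v := fun h => hwv (hinj w v (by tauto) h)
  have := hmono w b v a hbw.adj_sub.symm hva.adj_sub (by tauto) (by omega)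
  omega

theorem fc_val (n : ℕ) [NeZero n] (x a c : ZMod n) :
    (c - a).val = if (a - x).val ≤ (c - x).val then (c - x).val - (a - x).val
      else (c - x).val + n - (a - x).val := by
  have e : c - a = (c - x) - (a - x) := by ring
  have h1 := ZMod.val_lt (c - x)
  have h2 := ZMod.val_lt (a - x)
  split_ifs with h
  · rw [e, ZMod.val_sub h]
  · have h' : c - a = (((c - x).val + n - (a - x).val : ℕ) : ZMod n) := by
      rw [Nat.cast_sub (by omega)]
      simp
    rw [h', ZMod.val_natCast, Nat.mod_eq_of_lt (by omega)]

theorem fc_cross (n : ℕ) [NeZero n] (S : Set (Sym2 (ZMod n)))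
    (hS : NonCrossingChords n S) (x a b c d : ZMod n)
    (hab : s(a, b) ∈ S) (hcd : s(c, d) ∈ S)
    (h1 : (a - x).val < (c - x).val) (h2 : (c - x).val < (b - x).val)
    (h3 : (b - x).val < (d - x).val) : False := by
  have hd := ZMod.val_lt (d - x)
  refine hS.2 _ hab _ hcd ?_ ?_
  · intro h
    rw [Sym2.eq_iff] at h
    rcases h with ⟨rfl, rfl⟩ | ⟨rfl, rfl⟩ <;> omega
  · intro a' b' c' d' h h'
    rw [Sym2.eq_iff] at h h'
    unfold Between Xor' Xor
    rcases h with ⟨rfl, rfl⟩ | ⟨rfl, rfl⟩ <;> rcases h' with ⟨rfl, rfl⟩ | ⟨rfl, rfl⟩ <;>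
    · simp only [fc_val n x a, fc_val n x b]
      split_ifs <;> omega

theorem fc_free (n : ℕ) [NeZero n] (hn : 3 ≤ n) (S : Set (Sym2 (ZMod n)))
    (hS : NonCrossingChords n S) (x : ZMod n) : ∀ (m : ℕ) (a b : ZMod n),
    s(a, b) ∈ S → (a - x).val < (b - x).val → (b - x).val - (a - x).val ≤ m →
    ∃ v, ChordFree n S v ∧ (a - x).val < (v - x).val ∧ (v - x).val < (b - x).val := by
  intro m
  induction m with
  | zero => intro a b _ _ _; omega
  | succ m ih =>
    intro a b hab hlt hle
    have hb := ZMod.val_lt (b - x)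
    have hval : (a + 1 - x).val = (a - x).val + 1 := by
      have : a + 1 - x = (((a - x).val + 1 : ℕ) : ZMod n) := by
        push_cast; simp; ring
      rw [this, ZMod.val_natCast, Nat.mod_eq_of_lt (by omega)]
    have hne : (b - x).val ≠ (a - x).val + 1 := by
      intro h
      rw [← hval] at h
      have := ZMod.val_injective n h
      refine (hS.1 _ hab).2 ⟨a, ?_⟩
      rw [sub_left_inj.1 this]
    by_cases hf : ChordFree n S (a + 1)
    · exact ⟨a + 1, hf, by omega, by omega⟩
    · unfold ChordFree at hf
      push Not at hf
      obtain ⟨e, he, hmem⟩ := hf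
      obtain ⟨c, rfl⟩ := Sym2.mem_iff_exists.1 hmem
      have hch := hS.1 _ he
      have hc1 : (c - x).val ≠ (a + 1 - x).val := by
        intro h
        have := sub_left_inj.1 (ZMod.val_injective n h)
        exact hch.1 (by simp [this])
      have hc2 : (c - x).val ≠ (a - x).val := by
        intro h
        have := sub_left_inj.1 (ZMod.val_injective n h)
        exact hch.2 ⟨a, by rw [this, Sym2.eq_swap]⟩
      have hc3 : ¬ (b - x).val < (c - x).val := fun h =>
        fc_cross n S hS x a b (a + 1) c hab he (by omega) (by omega) h
      have hc4 : ¬ (c - x).val < (a - x).val := fun h =>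
        fc_cross n S hS x c (a + 1) a b (by rwa [Sym2.eq_swap]) hab h (by omega) (by omega)
      obtain ⟨v, hv, h1, h2⟩ := ih (a + 1) c he (by omega) (by omega)
      exact ⟨v, hv, by omega, by omega⟩

/-- The paper's Lemma 4: if a set of pairwise non-crossing chords of the
standard `n`-cycle leaves exactly two chord-free vertices, then the chord graph
is acyclic and all of its connected components are caterpillars. -/
theorem forest_of_caterpillars (n : ℕ) (hn : 3 ≤ n) (S : Set (Sym2 (ZMod n)))
    (hS : NonCrossingChords n S)
    (h2 : {u : ZMod n | ChordFree n S u}.ncard = 2) :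
    (chordGraph n S).IsAcyclic ∧
      ∀ C : (chordGraph n S).ConnectedComponent,
        IsCaterpillar ((chordGraph n S).induce C.supp) := by
  classical
  haveI : NeZero n := ⟨by omega⟩
  obtain ⟨x, y, hxy, hset⟩ := Set.ncard_eq_two.1 h2
  have hfree : ∀ v, ChordFree n S v → v = x ∨ v = y := by
    intro v hv
    have : v ∈ {u : ZMod n | ChordFree n S u} := hv
    rw [hset] at this
    simpa using this
  have hyf : ChordFree n S y := by
    have : y ∈ {u : ZMod n | ChordFree n S u} := by rw [hset]; simp
    exact this
  have hsep : ∀ a b, s(a, b) ∈ S → (a - x).val < (b - x).val →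
      (a - x).val < (y - x).val ∧ (y - x).val < (b - x).val := by
    intro a b hab hlt
    obtain ⟨v, hv, h1, h2⟩ := fc_free n hn S hS x _ a b hab hlt le_rfl
    rcases hfree v hv with rfl | rfl
    · simp at h1
    · exact ⟨h1, h2⟩
  have hS' : ∀ a b, (chordGraph n S).Adj a b → s(a, b) ∈ S ∧ (a - x).val ≠ (b - x).val := by
    intro a b h
    unfold chordGraph at h
    rw [SimpleGraph.fromEdgeSet_adj] at h
    exact ⟨h.1, fun h' => h.2 (sub_left_inj.1 (ZMod.val_injective n h'))⟩
  let A : ZMod n → Prop := fun v => (v - x).val < (y - x).val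
  let pos : ZMod n → ℤ := fun v => if A v then ((v - x).val : ℤ) else -((v - x).val : ℤ)
  have hsep' : ∀ a b, (chordGraph n S).Adj a b →
      ((a - x).val < (y - x).val ∧ (y - x).val < (b - x).val) ∨
      ((b - x).val < (y - x).val ∧ (y - x).val < (a - x).val) := by
    intro a b h
    obtain ⟨h1, h2⟩ := hS' a b h
    rcases lt_or_gt_of_ne h2 with h | h
    · exact .inl (hsep a b h1 h)
    · exact .inr (hsep b a (by rwa [Sym2.eq_swap]) h)
  have hadj : ∀ a b, (chordGraph n S).Adj a b → (A a ↔ ¬ A b) := by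
    intro a b h
    have := hsep' a b h
    simp only [A]
    omega
  have hinj : ∀ a b, (A a ↔ A b) → pos a = pos b → a = b := by
    intro a b h hp
    simp only [pos, h] at hp
    have : (a - x).val = (b - x).val := by split_ifs at hp <;> omega
    exact sub_left_inj.1 (ZMod.val_injective n this)
  have hmono : ∀ a b a' b', (chordGraph n S).Adj a b → (chordGraph n S).Adj a' b' →
      (A a ↔ A a') → pos a < pos a' → pos b ≤ pos b' := by
    intro a b a' b' h h' hA hp
    have k := hsep' a b h
    have k' := hsep' a' b' h'
    obtain ⟨m, -⟩ := hS' a b h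
    obtain ⟨m', -⟩ := hS' a' b' h'
    by_contra hcon
    simp only [pos, A] at hA hp hcon
    by_cases hAa : (a - x).val < (y - x).val
    · refine fc_cross n S hS x a b a' b' m m' ?_ ?_ ?_ <;> split_ifs at hp hcon <;> omega
    · refine fc_cross n S hS x b' a' b a (by rwa [Sym2.eq_swap]) (by rwa [Sym2.eq_swap]) ?_ ?_ ?_ <;>
        split_ifs at hp hcon <;> omega
  have hac := fc_acyclic _ A pos hadj hinj hmono
  refine ⟨hac, fun C => ?_⟩
  have hconn : ((chordGraph n S).induce C.supp).Connected := C.connected_toSimpleGraph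
  refine ⟨hconn, hac.induce _, ?_⟩
  exact fc_path _ hconn (fun v => A v) (fun v => pos v)
    (fun a b h => hadj a b h) (fun a b h h' => Subtype.ext (hinj a b h h'))
    (fun a b a' b' h h' => hmono a b a' b' h h')
end

section
/- Let n ≥ 3 and let S be a set of pairwise non-crossing chords of the standard n-cycle. Suppose there exist seven pairwise distinct vertices c, a_1, a_2, a_3, b_1, b_2, b_3 of ZMod n such that {c, a_i} ∈ S and {a_i, b_i} ∈ S for i = 1, 2, 3 (i.e. the chord graph contains a spider with three legs of length two). Then at least three vertices of ZMod n are chord-free for S. (This is the key step in the proof of the paper's Lemma 4: a non-caterpillar component of the chord graph forces at least three vertices of degree three in the polytope.) -/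
lemma aux_val (n : ℕ) (x : ZMod n) (i k : ℕ) (hi : i < n) (hk : k < n) :
    ((x + (k : ZMod n)) - (x + (i : ZMod n))).val = if i ≤ k then k - i else n + k - i := by
  have e : (x + (k : ZMod n)) - (x + (i : ZMod n)) =
      (((if i ≤ k then k - i else n + k - i : ℕ)) : ZMod n) := by
    split_ifs with h
    · rw [Nat.cast_sub h]; ring
    · rw [Nat.cast_sub (by omega)]; push_cast; simp
  rw [e, ZMod.val_natCast, Nat.mod_eq_of_lt]
  split_ifs <;> omega

lemma aux_inj (n : ℕ) (x : ZMod n) (i k : ℕ) (hi : i < n) (hk : k < n) (hne : i ≠ k) :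
    x + (k : ZMod n) ≠ x + (i : ZMod n) := by
  intro h
  have h2 := aux_val n x i k hi hk
  rw [h, sub_self, ZMod.val_zero] at h2
  split_ifs at h2 <;> omega

lemma aux_nc (n : ℕ) (S : Set (Sym2 (ZMod n))) (hS : NonCrossingChords n S)
    (x : ZMod n) (i j k l : ℕ) (hik : i < k) (hkj : k < j) (hj : j < n) (hl : l < n)
    (h1 : s(x + (i : ZMod n), x + (j : ZMod n)) ∈ S)
    (h2 : s(x + (k : ZMod n), x + (l : ZMod n)) ∈ S) : i ≤ l ∧ l ≤ j := by
  by_contra hcon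
  refine hS.2 _ h1 _ h2 ?_ ?_
  · intro h
    have m : x + (k : ZMod n) ∈ s(x + (i : ZMod n), x + (j : ZMod n)) := by
      rw [h]; exact Sym2.mem_mk_left _ _
    rcases Sym2.mem_iff.1 m with m | m
    · exact aux_inj n x i k (by omega) (by omega) (by omega) m
    · exact aux_inj n x j k (by omega) (by omega) (by omega) m
  · intro a b c d hab hcd
    have vik := aux_val n x i k (by omega) (by omega)
    have vil := aux_val n x i l (by omega) (by omega)
    have vij := aux_val n x i j (by omega) (by omega)
    have vjk := aux_val n x j k (by omega) (by omega)
    have vjl := aux_val n x j l (by omega) (by omega)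
    have vji := aux_val n x j i (by omega) (by omega)
    rcases Sym2.eq_iff.1 hab with ⟨rfl, rfl⟩ | ⟨rfl, rfl⟩ <;>
    rcases Sym2.eq_iff.1 hcd with ⟨rfl, rfl⟩ | ⟨rfl, rfl⟩ <;>
    simp only [Xor', Xor, Between, vik, vil, vij, vjk, vjl, vji] <;>
    split_ifs <;> omega

lemma aux_rep (n : ℕ) (hn : 3 ≤ n) (x w : ZMod n) : ∃ m : ℕ, m < n ∧ w = x + (m : ZMod n) := by
  have : NeZero n := ⟨by omega⟩
  exact ⟨(w - x).val, ZMod.val_lt _, by simp⟩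

lemma aux_ear (n : ℕ) (hn : 3 ≤ n) (S : Set (Sym2 (ZMod n))) (hS : NonCrossingChords n S)
    (m : ℕ) : ∀ x : ZMod n, m < n → s(x, x + (m : ZMod n)) ∈ S →
      ∃ k : ℕ, 0 < k ∧ k < m ∧ ChordFree n S (x + (k : ZMod n)) := by
  induction m using Nat.strong_induction_on with
  | _ m ih =>
  intro x hm h
  have hc := hS.1 _ h
  have hm0 : m ≠ 0 := by
    rintro rfl
    exact hc.1 (by simp)
  have hm1 : m ≠ 1 := by
    rintro rfl
    exact hc.2 ⟨x, by simp⟩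
  by_cases hf : ChordFree n S (x + ((1 : ℕ) : ZMod n))
  · exact ⟨1, by omega, by omega, hf⟩
  · simp only [ChordFree, not_forall, not_not] at hf
    obtain ⟨e, he, hxe⟩ := hf
    obtain ⟨w, rfl⟩ := hxe
    obtain ⟨l, hl, rfl⟩ := aux_rep n hn x w
    have hb := aux_nc n S hS x 0 m 1 l (by omega) (by omega) hm hl (by simpa using h) he
    have hc2 := hS.1 _ he
    have hl0 : l ≠ 0 := by
      rintro rfl
      exact hc2.2 ⟨x, by simp [Sym2.eq_swap]⟩
    obtain ⟨p, rfl⟩ : ∃ p, l = p + 1 := ⟨l - 1, by omega⟩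
    have e2 : x + ((p + 1 : ℕ) : ZMod n) = (x + ((1 : ℕ) : ZMod n)) + (p : ZMod n) := by
      push_cast; ring
    rw [e2] at he
    obtain ⟨k, hk0, hkp, hk⟩ := ih p (by omega) _ (by omega) he
    refine ⟨k + 1, by omega, by omega, ?_⟩
    have e3 : x + ((k + 1 : ℕ) : ZMod n) = (x + ((1 : ℕ) : ZMod n)) + (k : ZMod n) := by
      push_cast; ring
    rwa [e3]

lemma aux_ear2 (n : ℕ) (hn : 3 ≤ n) (S : Set (Sym2 (ZMod n))) (hS : NonCrossingChords n S)
    (x : ZMod n) (i j : ℕ) (hij : i < j) (hd : j - i < n)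
    (h : s(x + (i : ZMod n), x + (j : ZMod n)) ∈ S) :
      ∃ k : ℕ, i < k ∧ k < j ∧ ChordFree n S (x + (k : ZMod n)) := by
  have e : x + (j : ZMod n) = (x + (i : ZMod n)) + ((j - i : ℕ) : ZMod n) := by
    rw [Nat.cast_sub hij.le]; ring
  rw [e] at h
  obtain ⟨k, h0, h1, h2⟩ := aux_ear n hn S hS (j - i) _ hd h
  refine ⟨i + k, by omega, by omega, ?_⟩
  have e3 : x + ((i + k : ℕ) : ZMod n) = (x + (i : ZMod n)) + (k : ZMod n) := by
    push_cast; ring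
  rwa [e3]

lemma aux_main (n : ℕ) (hn : 3 ≤ n) (S : Set (Sym2 (ZMod n))) (hS : NonCrossingChords n S)
    (c : ZMod n) (p q r b : ℕ) (hp : 0 < p) (hpq : p < q) (hqr : q < r) (hr : r < n)
    (hb : b < n) (hb0 : b ≠ 0) (hbp : b ≠ p) (hbq : b ≠ q) (hbr : b ≠ r)
    (h1 : s(c, c + (p : ZMod n)) ∈ S) (h3 : s(c, c + (r : ZMod n)) ∈ S)
    (h5 : s(c + (q : ZMod n), c + (b : ZMod n)) ∈ S) :
    ∃ v₁ v₂ v₃ : ZMod n, v₁ ≠ v₂ ∧ v₁ ≠ v₃ ∧ v₂ ≠ v₃ ∧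
      ChordFree n S v₁ ∧ ChordFree n S v₂ ∧ ChordFree n S v₃ := by
  have h1' : s(c + ((0 : ℕ) : ZMod n), c + (p : ZMod n)) ∈ S := by simpa using h1
  have h3' : s(c + ((0 : ℕ) : ZMod n), c + (r : ZMod n)) ∈ S := by simpa using h3
  have h3'' : s(c + (r : ZMod n), c + (n : ZMod n)) ∈ S := by
    rw [Sym2.eq_swap]; simpa using h3
  have h5' : s(c + (b : ZMod n), c + (q : ZMod n)) ∈ S := by
    rw [Sym2.eq_swap]; exact h5
  have t1 := aux_nc n S hS c 0 r q b (by omega) hqr hr hb h3' h5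
  have t2 : p < b := by
    by_contra hlt
    have := aux_nc n S hS c 0 p b q (by omega) (by omega) (by omega) (by omega) h1' h5'
    omega
  obtain ⟨k1, _, _, f1⟩ := aux_ear2 n hn S hS c 0 p hp (by omega) h1'
  obtain ⟨k3, _, _, f3⟩ := aux_ear2 n hn S hS c r n hr (by omega) h3''
  obtain ⟨k2, _, _, f2⟩ : ∃ k : ℕ, p < k ∧ k < r ∧ ChordFree n S (c + (k : ZMod n)) := by
    rcases lt_or_gt_of_ne hbq with h | h
    · obtain ⟨k, _, _, f⟩ := aux_ear2 n hn S hS c b q h (by omega) h5'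
      exact ⟨k, by omega, by omega, f⟩
    · obtain ⟨k, _, _, f⟩ := aux_ear2 n hn S hS c q b h (by omega) h5
      exact ⟨k, by omega, by omega, f⟩
  exact ⟨_, _, _, aux_inj n c k2 k1 (by omega) (by omega) (by omega),
    aux_inj n c k3 k1 (by omega) (by omega) (by omega),
    aux_inj n c k3 k2 (by omega) (by omega) (by omega), f1, f2, f3⟩

/-- Key step in the proof of the paper's Lemma 4: a spider with three legs of
length two in the chord graph forces at least three chord-free vertices. -/
theorem three_chord_free_of_spider (n : ℕ) (hn : 3 ≤ n)
    (S : Set (Sym2 (ZMod n))) (hS : NonCrossingChords n S)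
    (c a₁ a₂ a₃ b₁ b₂ b₃ : ZMod n)
    (hdist : ([c, a₁, a₂, a₃, b₁, b₂, b₃] : List (ZMod n)).Pairwise (· ≠ ·))
    (h1 : s(c, a₁) ∈ S) (h2 : s(c, a₂) ∈ S) (h3 : s(c, a₃) ∈ S)
    (h4 : s(a₁, b₁) ∈ S) (h5 : s(a₂, b₂) ∈ S) (h6 : s(a₃, b₃) ∈ S) :
    ∃ v₁ v₂ v₃ : ZMod n, v₁ ≠ v₂ ∧ v₁ ≠ v₃ ∧ v₂ ≠ v₃ ∧
      ChordFree n S v₁ ∧ ChordFree n S v₂ ∧ ChordFree n S v₃ := by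
  obtain ⟨p, hp, rfl⟩ := aux_rep n hn c a₁
  obtain ⟨q, hq, rfl⟩ := aux_rep n hn c a₂
  obtain ⟨r, hr, rfl⟩ := aux_rep n hn c a₃
  obtain ⟨u, hu, rfl⟩ := aux_rep n hn c b₁
  obtain ⟨v, hv, rfl⟩ := aux_rep n hn c b₂
  obtain ⟨w, hw, rfl⟩ := aux_rep n hn c b₃
  have key : ([0, p, q, r, u, v, w] : List ℕ).Pairwise (· ≠ ·) := by
    have : (([0, p, q, r, u, v, w] : List ℕ).map (fun k : ℕ => c + (k : ZMod n))).Pairwise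
        (· ≠ ·) := by simpa using hdist
    rw [List.pairwise_map] at this
    exact this.imp (fun h e => h (by rw [e]))
  simp only [List.pairwise_cons, List.mem_cons, List.not_mem_nil, or_false, forall_eq_or_imp,
    forall_eq] at key
  rcases lt_or_gt_of_ne (show p ≠ q by omega) with x | x <;>
  rcases lt_or_gt_of_ne (show p ≠ r by omega) with y | y <;>
  rcases lt_or_gt_of_ne (show q ≠ r by omega) with z | z
  · exact aux_main n hn S hS c p q r v (by omega) (by omega) (by omega) (by omega) (by omega) (by omega) (by omega) (by omega) (by omega) h1 h3 h5
  · exact aux_main n hn S hS c p r q w (by omega) (by omega) (by omega) (by omega) (by omega) (by omega) (by omega) (by omega) (by omega) h1 h2 h6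
  · omega
  · exact aux_main n hn S hS c r p q u (by omega) (by omega) (by omega) (by omega) (by omega) (by omega) (by omega) (by omega) (by omega) h3 h2 h4
  · exact aux_main n hn S hS c q p r u (by omega) (by omega) (by omega) (by omega) (by omega) (by omega) (by omega) (by omega) (by omega) h2 h3 h4
  · omega
  · exact aux_main n hn S hS c q r p w (by omega) (by omega) (by omega) (by omega) (by omega) (by omega) (by omega) (by omega) (by omega) h2 h1 h6
  · exact aux_main n hn S hS c r q p v (by omega) (by omega) (by omega) (by omega) (by omega) (by omega) (by omega) (by omega) (by omega) h3 h1 h5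
end

section
/- Let x, y ≥ 2 be integers. Then there exist two non-isomorphic forests on x + y + 2 vertices, each acyclic with exactly two connected components, whose multiset of vertex degrees is {x, y} together with x + y entries equal to 1. (Concretely, the caterpillar with two adjacent centres of degrees x and y together with a disjoint edge K_2, versus the disjoint union of the stars S_x and S_y; this is the claim used in the proof of the paper's Theorem 1 to rule out two vertices of degree at least 2 in distinct forms from a unigraphic forest.) -/
/-- Graph of a parent function. -/
def PG (n : ℕ) (p : ℕ → ℕ) : SimpleGraph (Fin n) where
  Adj a b := a ≠ b ∧ (p a.val = b.val ∨ p b.val = a.val)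
  symm := ⟨fun _ _ h => ⟨h.1.symm, h.2.symm⟩⟩
  loopless := ⟨fun _ h => h.1 rfl⟩

theorem PG_adj (n : ℕ) (p : ℕ → ℕ) (a b : Fin n) :
    (PG n p).Adj a b ↔ a.val ≠ b.val ∧ (p a.val = b.val ∨ p b.val = a.val) := by
  simp [PG, Fin.ext_iff]

theorem PG_acyclic (n : ℕ) (p : ℕ → ℕ) (hp : ∀ v, p v ≤ v) : (PG n p).IsAcyclic := by
  intro v c hc
  obtain ⟨u, hu, hmax⟩ := c.support.toFinset.exists_max_image id ⟨v, by simp⟩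
  simp only [List.mem_toFinset, id] at hu hmax
  have hc' := hc.rotate hu
  have hne := hc'.snd_ne_penultimate
  have h1 := (c.rotate u hu).adj_snd hc'.not_nil
  have h2 := ((c.rotate u hu).adj_penultimate hc'.not_nil).symm
  have m1 := hmax (c.rotate u hu).snd (by
    rw [← SimpleGraph.Walk.mem_support_rotate_iff c u hu]; exact SimpleGraph.Walk.getVert_mem_support _ _)
  have m2 := hmax (c.rotate u hu).penultimate (by
    rw [← SimpleGraph.Walk.mem_support_rotate_iff c u hu]; exact SimpleGraph.Walk.getVert_mem_support _ _)
  rw [PG_adj] at h1 h2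
  have := hp (c.rotate u hu).snd
  have := hp (c.rotate u hu).penultimate
  rw [Fin.le_def] at m1 m2
  apply hne
  ext
  omega

theorem PG_comp {V : Type*} (G : SimpleGraph V) (f : V → Bool) (r : Bool → V)
    (h1 : ∀ a b, G.Adj a b → f a = f b) (h2 : ∀ v, G.Reachable v (r (f v)))
    (h3 : ∀ b, f (r b) = b) : Nat.card G.ConnectedComponent = 2 := by
  have hr : ∀ a b, G.Reachable a b → f a = f b := by
    rintro a b ⟨w⟩
    induction w with
    | nil => rfl
    | cons h _ ih => exact (h1 _ _ h).trans ih
  have hb : Function.Bijective (fun b => G.connectedComponentMk (r b)) := by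
    constructor
    · intro a b hab
      have := hr _ _ (SimpleGraph.ConnectedComponent.exact hab)
      rwa [h3, h3] at this
    · intro c
      induction c using SimpleGraph.ConnectedComponent.ind with
      | h v => exact ⟨f v, SimpleGraph.ConnectedComponent.sound (h2 v).symm⟩
  rw [← Nat.card_eq_of_bijective _ hb]
  simp

theorem PG_deg (n : ℕ) (G : SimpleGraph (Fin n)) [DecidableRel G.Adj] (v : Fin n) (S : Finset ℕ)
    (hS : ∀ w ∈ S, w < n) (h : ∀ w : Fin n, G.Adj v w ↔ w.val ∈ S) : G.degree v = S.card := by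
  rw [← SimpleGraph.card_neighborFinset_eq_degree,
    ← Finset.card_map Fin.valEmbedding]
  congr 1
  ext w
  simp only [Finset.mem_map, SimpleGraph.mem_neighborFinset, Fin.valEmbedding_apply]
  constructor
  · rintro ⟨a, ha, rfl⟩
    exact (h a).1 ha
  · intro hw
    exact ⟨⟨w, hS w hw⟩, (h _).2 hw, rfl⟩

theorem PG_degM (x y : ℕ) (G : SimpleGraph (Fin (x + y + 2))) (S : ℕ → Finset ℕ)
    (hS : ∀ v < x + y + 2, ∀ w ∈ S v, w < x + y + 2)
    (h : ∀ v w : Fin (x + y + 2), G.Adj v w ↔ w.val ∈ S v.val)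
    (h0 : (S 0).card = x) (h1 : (S 1).card = y)
    (h2 : ∀ v < x + y + 2, 2 ≤ v → (S v).card = 1) :
    degMultiset G = x ::ₘ y ::ₘ Multiset.replicate (x + y) 1 := by
  classical
  have hd : ∀ v : Fin (x + y + 2), G.degree v = (S v.val).card := fun v =>
    PG_deg _ G v _ (hS v v.2) (h v)
  have : degMultiset G = Finset.univ.val.map fun v : Fin (x + y + 2) => (S v.val).card := by
    unfold degMultiset
    refine Multiset.map_congr rfl fun v _ => ?_
    rw [← hd v]
  rw [this, Fin.univ_succ, Finset.cons_val, Multiset.map_cons, Finset.map_val, Fin.univ_succ,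
    Finset.cons_val, Multiset.map_cons, Multiset.map_cons, Finset.map_val, Multiset.map_map,
    Multiset.map_map]
  congr 1
  congr 1
  rw [Multiset.eq_replicate]
  constructor
  · simp
  · intro b hb
    rw [Multiset.mem_map] at hb
    obtain ⟨a, _, rfl⟩ := hb
    exact h2 _ (by simp) (by simp)

/-- For `x, y ≥ 2` there are two non-isomorphic forests on `x + y + 2` vertices,
each with exactly two connected components, with degree multiset
`{x, y, 1^(x+y)}` (caterpillar `C(x,y)` plus `K₂`, versus `S_x ⊔ S_y`). -/
theorem two_forest_realisations (x y : ℕ) (hx : 2 ≤ x) (hy : 2 ≤ y) :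
    ∃ G G' : SimpleGraph (Fin (x + y + 2)),
      G.IsAcyclic ∧ G'.IsAcyclic ∧
      Nat.card G.ConnectedComponent = 2 ∧
      Nat.card G'.ConnectedComponent = 2 ∧
      degMultiset G = x ::ₘ y ::ₘ Multiset.replicate (x + y) 1 ∧
      degMultiset G' = x ::ₘ y ::ₘ Multiset.replicate (x + y) 1 ∧
      ¬ Nonempty (G ≃g G') := by
  set p : ℕ → ℕ := fun v => if v ≤ x then 0 else if v < x + y then 1 else x + y with hp
  set q : ℕ → ℕ := fun v => if v = 0 then 0 else if v = 1 then 1 else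
    if v < x + 2 then 0 else 1 with hq
  have padj : ∀ a b : Fin (x + y + 2), (PG _ p).Adj a b ↔ _ := PG_adj _ p
  have qadj : ∀ a b : Fin (x + y + 2), (PG _ q).Adj a b ↔ _ := PG_adj _ q
  refine ⟨PG _ p, PG _ q, PG_acyclic _ _ ?_, PG_acyclic _ _ ?_,
    PG_comp _ (fun v => decide (v.val < x + y))
      (fun b => if b then ⟨0, by omega⟩ else ⟨x + y, by omega⟩) ?_ ?_ ?_,
    PG_comp _ (fun v => decide (q v.val = 0))
      (fun b => if b then ⟨0, by omega⟩ else ⟨1, by omega⟩) ?_ ?_ ?_,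
    PG_degM x y _ (fun v => if v = 0 then Finset.Icc 1 x else
      if v = 1 then insert 0 (Finset.Ico (x + 1) (x + y)) else
      if v = x + y then {x + y + 1} else {p v}) ?_ ?_ ?_ ?_ ?_,
    PG_degM x y _ (fun v => if v = 0 then Finset.Ico 2 (x + 2) else
      if v = 1 then Finset.Ico (x + 2) (x + y + 2) else {q v}) ?_ ?_ ?_ ?_ ?_, ?_⟩
  · intro v; simp only [hp]; grind
  · intro v; simp only [hq]; grind
  · intro a b h
    rw [padj] at h
    simp only [hp] at h
    grind
  · intro v
    have e1 : (PG (x + y + 2) p).Adj ⟨1, by omega⟩ ⟨0, by omega⟩ := by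
      rw [padj]; simp only [hp]; grind
    by_cases hv : v.val < x + y
    · simp only [hv, decide_true, if_true]
      by_cases h0 : v.val = 0
      · have : v = ⟨0, by omega⟩ := Fin.ext h0
        rw [this]
      by_cases hv' : v.val ≤ x
      · apply SimpleGraph.Adj.reachable
        rw [padj]; simp only [hp]; grind
      · refine SimpleGraph.Reachable.trans (SimpleGraph.Adj.reachable ?_) e1.reachable
        rw [padj]; simp only [hp]; grind
    · simp only [hv, decide_false]
      by_cases h0 : v.val = x + y
      · have : v = ⟨x + y, by omega⟩ := Fin.ext h0
        rw [this]; simp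
      · apply SimpleGraph.Adj.reachable
        rw [padj]; simp only [hp]; grind
  · intro b; cases b <;> simp; omega
  · intro a b h
    rw [qadj] at h
    simp only [hq] at h ⊢
    grind
  · intro v
    by_cases h0 : v.val = 0
    · have : v = ⟨0, by omega⟩ := Fin.ext h0
      rw [this]; simp [hq]
    by_cases h1 : v.val = 1
    · have : v = ⟨1, by omega⟩ := Fin.ext h1
      rw [this]; simp [hq]
    apply SimpleGraph.Adj.reachable
    rw [qadj]; simp only [hq]; grind
  · intro b; cases b <;> simp [hq]
  · intro v hv w hw
    simp only [hp] at hw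
    grind
  · intro v w
    have := v.2
    have := w.2
    rw [padj]; simp only [hp]
    grind
  · simp
  · simp; omega
  · intro v hv h2
    grind
  · intro v hv w hw
    simp only [hq] at hw
    grind
  · intro v w
    have := v.2
    have := w.2
    rw [qadj]; simp only [hq]
    grind
  · simp
  · simp
  · intro v hv h2
    grind
  · rintro ⟨e⟩
    obtain ⟨a, b, hab, ha, hb⟩ : ∃ a b, (PG (x + y + 2) p).Adj a b ∧
        (∀ c, (PG (x + y + 2) p).Adj a c → c = b) ∧
        (∀ c, (PG (x + y + 2) p).Adj b c → c = a) := by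
      refine ⟨⟨x + y, by omega⟩, ⟨x + y + 1, by omega⟩, ?_, ?_, ?_⟩
      · rw [padj]; simp only [hp]; grind
      · intro c hc
        rw [padj] at hc; simp only [hp] at hc; ext; have := c.2; grind
      · intro c hc
        rw [padj] at hc; simp only [hp] at hc; ext; have := c.2; grind
    have key : ∀ a b, (∀ c, (PG (x + y + 2) p).Adj a c → c = b) →
        (e a).val ≠ 0 ∧ (e a).val ≠ 1 := by
      intro a b h
      have h' : ∀ c d, (PG (x + y + 2) q).Adj (e a) c → (PG (x + y + 2) q).Adj (e a) d →
          c = d := by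
        intro c d hc hd
        have h1 := h (e.symm c) (by rw [← e.map_adj_iff]; simpa using hc)
        have h2 := h (e.symm d) (by rw [← e.map_adj_iff]; simpa using hd)
        exact e.symm.injective (h1.trans h2.symm)
      constructor
      · intro h0
        have := h' ⟨2, by omega⟩ ⟨3, by omega⟩ (by rw [qadj]; simp only [hq]; grind)
          (by rw [qadj]; simp only [hq]; grind)
        simp at this
      · intro h0
        have := h' ⟨x + 2, by omega⟩ ⟨x + 3, by omega⟩ (by rw [qadj]; simp only [hq]; grind)
          (by rw [qadj]; simp only [hq]; grind)
        simp at this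
    have k1 := key a b ha
    have k2 := key b a hb
    have := e.map_adj_iff.2 hab
    rw [qadj] at this
    simp only [hq] at this
    grind
end
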